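/- Assume the Weak Chowla Conjecture: for every ε > 0 there exist infinitely many ε-near Fermat primes. Then for every finite simple graph H with at least one edge, the forbidden-subgraph property Q_n^H is evasive for all sufficiently large n (i.e., there exists N such that for all n ≥ N the Boolean function Q_n^H on the n(n-1)/2 adjacency variables has deterministic query complexity exactly n(n-1)/2). -/

import Mathlib

/-- A deterministic decision tree over a set of Boolean variables indexed by `ι`. -/
inductive DecisionTree (ι : Type) : Type
  | leaf : Bool → DecisionTree ι
  | node : ι → DecisionTree ι → DecisionTree ι → DecisionTree ι

namespace DecisionTree

/-- Evaluate a decision tree on an input assignment. -/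
def eval {ι : Type} : DecisionTree ι → (ι → Bool) → Bool
  | leaf b, _ => b
  | node i t f, x => if x i then t.eval x else f.eval x

/-- The depth (worst-case number of queries) of a decision tree. -/
def depth {ι : Type} : DecisionTree ι → ℕ
  | leaf _ => 0
  | node _ t f => max t.depth f.depth + 1

end DecisionTree

/-- The variables of a graph property on `n` vertices: pairs `i < j`. -/
def EdgeVar (n : ℕ) := {p : Fin n × Fin n // p.1 < p.2}

/-- The graph on `Fin n` determined by an assignment to the adjacency variables. -/
def graphOfInput {n : ℕ} (x : EdgeVar n → Bool) : SimpleGraph (Fin n) :=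
  SimpleGraph.fromRel (fun i j => ∃ h : i < j, x ⟨(i, j), h⟩ = true)

/-- The deterministic query (decision-tree) complexity of a set of graphs on `Fin n`,
viewed as a Boolean function of the adjacency variables. -/
noncomputable def queryComplexity {n : ℕ} (P : Set (SimpleGraph (Fin n))) : ℕ :=
  sInf {d | ∃ T : DecisionTree (EdgeVar n),
    (∀ x, T.eval x = true ↔ graphOfInput x ∈ P) ∧ T.depth ≤ d}

/-- A set of graphs on `Fin n` is evasive if its query complexity is `n(n-1)/2`,
the total number of adjacency variables. -/
def Evasive {n : ℕ} (P : Set (SimpleGraph (Fin n))) : Prop :=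
  queryComplexity P = n * (n - 1) / 2

/-- `G` contains a (not necessarily induced) subgraph isomorphic to `H`. -/
def ContainsCopy {V : Type} (H : SimpleGraph V) {W : Type} (G : SimpleGraph W) : Prop :=
  ∃ f : V → W, Function.Injective f ∧ ∀ v w : V, H.Adj v w → G.Adj (f v) (f w)

/-- The forbidden-subgraph property `Q_n^H`: graphs on `Fin n` containing no copy of `H`. -/
def ForbiddenSubgraphProperty {V : Type} (H : SimpleGraph V) (n : ℕ) :
    Set (SimpleGraph (Fin n)) :=
  {G | ¬ ContainsCopy H G}

/-- A prime `p` is an `ε`-near Fermat prime if `2^s ∣ p - 1` and `(p-1)/2^s ≤ p^ε`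
for some `s ≥ 0`. -/
def NearFermatPrime (ε : ℝ) (p : ℕ) : Prop :=
  p.Prime ∧ ∃ s : ℕ, 2 ^ s ∣ p - 1 ∧ (((p - 1) / 2 ^ s : ℕ) : ℝ) ≤ (p : ℝ) ^ ε

namespace ModTwoChain

open Finset

variable {α : Type*}

/-- The mod 2 chains supported on a family `K` of finite sets. -/
def chains (K : Set (Finset α)) : Submodule (ZMod 2) (Finset α → ZMod 2) where
  carrier := {c | ∀ A ∉ K, c A = 0}
  add_mem' {c c'} h h' A hA := by simp [h A hA, h' A hA]
  zero_mem' := by simp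
  smul_mem' r c h A hA := by simp [h A hA]

/-- The map on chains induced by a permutation of the vertices. -/
def pull (g : Equiv.Perm α) : (Finset α → ZMod 2) →ₗ[ZMod 2] (Finset α → ZMod 2) where
  toFun c A := c (A.map g.toEmbedding)
  map_add' _ _ := rfl
  map_smul' _ _ := rfl

/-- The part of a chain supported on sets of size `i`. -/
def part (i : ℕ) (c : Finset α → ZMod 2) : Finset α → ZMod 2 :=
  fun A => if #A = i then c A else 0

theorem pull_apply (g : Equiv.Perm α) (c : Finset α → ZMod 2) (A : Finset α) :
    pull g c A = c (A.map g.toEmbedding) := rfl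

theorem chain_add_self (c : Finset α → ZMod 2) : c + c = 0 := by
  ext A; exact CharTwo.add_self_eq_zero _

theorem chains_mono {K L : Set (Finset α)} (h : K ⊆ L) : chains K ≤ chains L :=
  fun _ hc A hA => hc A fun hAK => hA (h hAK)

theorem part_mem_chains {K : Set (Finset α)} (i : ℕ) {c : Finset α → ZMod 2}
    (hc : c ∈ chains K) : part i c ∈ chains K :=
  fun A hA => by simp [part, hc A hA]

theorem map_map_of_involutive {σ : Equiv.Perm α} (hσ : ∀ x, σ (σ x) = x) (A : Finset α) :
    (A.map σ.toEmbedding).map σ.toEmbedding = A := by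
  rw [map_map]
  convert map_refl using 1
  exact congrArg (A.map ·) (by ext x; exact hσ x)

variable [Fintype α] [DecidableEq α]

/-- The simplicial boundary on mod 2 chains of finite subsets of `α`, augmented by the empty
face. -/
def boundary : (Finset α → ZMod 2) →ₗ[ZMod 2] (Finset α → ZMod 2) where
  toFun c B := ∑ x ∈ Bᶜ, c (insert x B)
  map_add' c c' := by ext B; simp [sum_add_distrib]
  map_smul' r c := by ext B; simp [mul_sum]

/-- The family `K` has vanishing reduced mod 2 homology. -/
def Acyclic (K : Set (Finset α)) : Prop :=
  ∀ c ∈ chains K, boundary c = 0 → ∃ b ∈ chains K, boundary b = c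

theorem boundary_apply (c : Finset α → ZMod 2) (B : Finset α) :
    boundary c B = ∑ x ∈ Bᶜ, c (insert x B) := rfl

theorem boundary_boundary (c : Finset α → ZMod 2) : boundary (boundary c) = 0 := by
  ext B
  simp only [boundary_apply, Pi.zero_apply]
  rw [sum_sigma']
  refine sum_involution (fun p _ => ⟨p.2, p.1⟩) ?_ ?_ ?_ ?_
  · rintro ⟨x, y⟩ h
    rw [insert_comm]
    exact CharTwo.add_self_eq_zero _
  · rintro ⟨x, y⟩ h _ he
    simp only [mem_sigma, mem_compl, mem_insert, not_or] at h
    simp only [Sigma.mk.injEq, heq_eq_eq] at he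
    exact h.2.1 he.1
  · rintro ⟨x, y⟩ h
    simp only [mem_sigma, mem_compl, mem_insert, not_or] at h ⊢
    exact ⟨h.2.2, fun e => h.2.1 e.symm, h.1⟩
  · rintro ⟨x, y⟩ h
    rfl

theorem boundary_pull (g : Equiv.Perm α) (c : Finset α → ZMod 2) :
    boundary (pull g c) = pull g (boundary c) := by
  ext B
  simp only [boundary_apply, pull_apply]
  refine sum_equiv g ?_ ?_
  · intro x; simp
  · intro x _; congr 1; ext; simp

theorem boundary_mem_chains {K : Set (Finset α)} (hK : IsLowerSet K) {c : Finset α → ZMod 2}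
    (hc : c ∈ chains K) : boundary c ∈ chains K := by
  intro B hB
  rw [boundary_apply]
  exact sum_eq_zero fun x _ => hc _ fun h => hB (hK (subset_insert x B) h)

/-- A cone is acyclic. -/
theorem acyclic_of_cone {K : Set (Finset α)} (v : α) (hv : ∀ A ∈ K, insert v A ∈ K) :
    Acyclic K := by
  intro c hc hd
  refine ⟨fun B => if v ∈ B then c (B.erase v) else 0, ?_, ?_⟩
  · intro B hB
    by_cases hvB : v ∈ B
    · simp only [hvB, if_true]
      apply hc
      intro h
      exact hB (by simpa [insert_erase hvB] using hv _ h)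
    · simp [hvB]
  · ext B
    rw [boundary_apply]
    by_cases hvB : v ∈ B
    · have h0 := congrFun hd (B.erase v)
      rw [boundary_apply, compl_erase, sum_insert (by simpa using hvB), insert_erase hvB,
        Pi.zero_apply] at h0
      have : ∀ x ∈ Bᶜ, (if v ∈ insert x B then c ((insert x B).erase v) else 0)
          = c (insert x (B.erase v)) := by
        intro x hx
        have hxv : x ≠ v := by rintro rfl; simp [hvB] at hx
        rw [if_pos (mem_insert_of_mem hvB), erase_insert_of_ne hxv]
      rw [sum_congr rfl this]
      exact (CharTwo.add_eq_zero.1 h0).symm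
    · rw [sum_eq_single v]
      · simp [erase_insert hvB]
      · intro x _ hx
        simp [hvB, hx.symm]
      · simp [hvB]

/-- The Mayer–Vietoris principle for acyclicity. -/
theorem Acyclic.union {K L : Set (Finset α)} (hK' : IsLowerSet K) (hL' : IsLowerSet L)
    (hK : Acyclic K) (hL : Acyclic L) (hKL : Acyclic (K ∩ L)) : Acyclic (K ∪ L) := by
  classical
  intro c hc hd
  set c₁ : Finset α → ZMod 2 := fun A => if A ∈ K then c A else 0 with hc₁
  have h₁ : c₁ ∈ chains K := fun A hA => by simp [hc₁, hA]
  have h₂ : c + c₁ ∈ chains L := by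
    intro A hA
    by_cases hAK : A ∈ K
    · simp [hc₁, hAK, CharTwo.add_self_eq_zero]
    · simp [hc₁, hAK, hc A (by simp [hA, hAK])]
  have hd₁ : boundary (c + c₁) = boundary c₁ := by rw [map_add, hd, zero_add]
  have hbd : boundary c₁ ∈ chains (K ∩ L) := by
    intro A hA
    by_cases hAK : A ∈ K
    · rw [← hd₁]; exact boundary_mem_chains hL' h₂ A fun h => hA ⟨hAK, h⟩
    · exact boundary_mem_chains hK' h₁ A hAK
  obtain ⟨y, hy, hyd⟩ := hKL _ hbd (boundary_boundary _)
  obtain ⟨b₁, hb₁, hbd₁⟩ := hK (c₁ + y)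
    (add_mem h₁ (chains_mono Set.inter_subset_left hy)) (by rw [map_add, hyd, chain_add_self])
  obtain ⟨b₂, hb₂, hbd₂⟩ := hL (c + c₁ + y)
    (add_mem h₂ (chains_mono Set.inter_subset_right hy))
    (by rw [map_add, hyd, hd₁, chain_add_self])
  refine ⟨b₁ + b₂, add_mem (chains_mono Set.subset_union_left hb₁)
    (chains_mono Set.subset_union_right hb₂), ?_⟩
  rw [map_add, hbd₁, hbd₂, show c₁ + y + (c + c₁ + y) = c + (c₁ + c₁) + (y + y) by abel,
    chain_add_self, chain_add_self, add_zero, add_zero]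

/-- A dominated vertex may be removed when testing acyclicity. -/
theorem acyclic_of_dominated {K : Set (Finset α)} (hK : IsLowerSet K) {v w : α} (hvw : v ≠ w)
    (hdom : ∀ A ∈ K, v ∈ A → insert w A ∈ K) (h : Acyclic {A ∈ K | v ∉ A}) : Acyclic K := by
  have hdecomp : K = {A ∈ K | v ∉ A} ∪ {A | insert v A ∈ K} := by
    ext A
    simp only [Set.mem_union, Set.mem_ofPred_eq]
    constructor
    · intro hA
      by_cases hv : v ∈ A
      · right; rwa [insert_eq_of_mem hv]
      · left; exact ⟨hA, hv⟩
    · rintro (hA | hA)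
      · exact hA.1
      · exact hK (subset_insert v A) hA
  rw [hdecomp]
  refine Acyclic.union ?_ ?_ h ?_ ?_
  · exact fun A B hBA hA => ⟨hK hBA hA.1, fun hv => hA.2 (hBA hv)⟩
  · exact fun A B hBA hA => hK (insert_subset_insert v hBA) hA
  · exact acyclic_of_cone v fun A hA => by simpa using hA
  · refine acyclic_of_cone w ?_
    rintro A ⟨⟨hA, hvA⟩, hA'⟩
    have := hdom _ hA' (mem_insert_self v A)
    refine ⟨⟨hK ?_ this, by simp [hvA, hvw]⟩, ?_⟩
    · exact insert_subset_insert w (subset_insert v A)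
    · simpa [insert_comm v w] using this

theorem boundary_part_succ (i : ℕ) (c : Finset α → ZMod 2) :
    boundary (part (i + 1) c) = part i (boundary c) := by
  ext B
  simp only [boundary_apply, part]
  split_ifs with h
  · refine sum_congr rfl fun x hx => ?_
    rw [if_pos]
    rw [card_insert_of_notMem (by simpa using hx), h]
  · refine sum_eq_zero fun x hx => ?_
    rw [if_neg]
    rw [card_insert_of_notMem (by simpa using hx)]
    omega

theorem boundary_part_zero (c : Finset α → ZMod 2) : boundary (part 0 c) = 0 := by
  ext B
  simp only [boundary_apply, part]
  exact sum_eq_zero fun x hx => by simp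

/-- The Tate differential attached to an involution of the vertices. -/
def tate (σ : Equiv.Perm α) : (Finset α → ZMod 2) →ₗ[ZMod 2] (Finset α → ZMod 2) :=
  boundary + (LinearMap.id + pull σ)

theorem tate_apply (σ : Equiv.Perm α) (c : Finset α → ZMod 2) (A : Finset α) :
    tate σ c A = boundary c A + (c A + c (A.map σ.toEmbedding)) := rfl

theorem tate_tate {σ : Equiv.Perm α} (hσ : ∀ x, σ (σ x) = x) (c : Finset α → ZMod 2) :
    tate σ (tate σ c) = 0 := by
  have hpp : pull σ (pull σ c) = c := by
    ext A
    rw [pull_apply, pull_apply, map_map_of_involutive hσ]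
  have h (c : Finset α → ZMod 2) : tate σ c = boundary c + (c + pull σ c) := rfl
  simp only [h, map_add, boundary_boundary, boundary_pull, hpp]
  have e1 := chain_add_self (boundary c)
  have e2 := chain_add_self (pull σ (boundary c))
  have e3 := chain_add_self c
  have e4 := chain_add_self (pull σ c)
  linear_combination e1 + e2 + e3 + e4

theorem tate_mem_chains {K : Set (Finset α)} (hK : IsLowerSet K) {σ : Equiv.Perm α}
    (hσK : ∀ A, A.map σ.toEmbedding ∈ K → A ∈ K) {c : Finset α → ZMod 2}
    (hc : c ∈ chains K) : tate σ c ∈ chains K := by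
  intro A hA
  rw [tate_apply, boundary_mem_chains hK hc A hA, hc A hA, hc _ fun h => hA (hσK A h)]
  simp

theorem exists_tate_eq {K : Set (Finset α)} (hK : IsLowerSet K) (hac : Acyclic K)
    {σ : Equiv.Perm α} (hσ : ∀ x, σ (σ x) = x)
    (hσK : ∀ A, A.map σ.toEmbedding ∈ K → A ∈ K) {z : Finset α → ZMod 2} (hz : z ∈ chains K)
    (hdz : tate σ z = 0) : ∃ w ∈ chains K, tate σ w = z := by
  suffices H : ∀ k i : ℕ, k + i = Fintype.card α + 1 → ∀ z ∈ chains K, tate σ z = 0 →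
      (∀ A : Finset α, #A < i → z A = 0) → ∃ w ∈ chains K, tate σ w = z from
    H (Fintype.card α + 1) 0 (by omega) z hz hdz (by simp)
  intro k
  induction k with
  | zero =>
    intro i hi z _ _ hlow
    refine ⟨0, zero_mem _, ?_⟩
    rw [map_zero]
    ext A
    exact (hlow A (by have := card_le_univ A; omega)).symm
  | succ k ih =>
    intro i hi z hz hdz hlow
    have hcyc : boundary (part i z) = 0 := by
      rcases i with _ | j
      · exact boundary_part_zero z
      · rw [boundary_part_succ]
        ext A
        simp only [part, Pi.zero_apply]
        split_ifs with hA
        · have := congrFun hdz A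
          rw [tate_apply, hlow A (by omega), hlow _ (by rw [card_map]; omega)] at this
          simpa using this
        · rfl
    obtain ⟨b, hb, hbz⟩ := hac _ (part_mem_chains i hz) hcyc
    have hb' : boundary (part (i + 1) b) = part i z := by
      rw [boundary_part_succ, hbz]
      ext A; simp +contextual [part]
    have hmem := part_mem_chains (i + 1) hb
    obtain ⟨w, hw, hwz⟩ := ih (i + 1) (by omega) (z + tate σ (part (i + 1) b))
      (add_mem hz (tate_mem_chains hK hσK hmem))
      (by rw [map_add, hdz, tate_tate hσ, add_zero]) (by
        intro A hA
        rw [Pi.add_apply, tate_apply, hb']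
        simp only [part, card_map]
        rw [if_neg (by omega : ¬ #A = i + 1), if_neg (by omega : ¬ #A = i + 1), add_zero, add_zero]
        split_ifs with h
        · exact CharTwo.add_self_eq_zero _
        · rw [hlow A (by omega), add_zero])
    refine ⟨w + part (i + 1) b, add_mem hw hmem, ?_⟩
    rw [map_add, hwz, add_assoc, chain_add_self, add_zero]

/-- Chains with Tate boundary supported on fixed faces are, up to Tate boundaries, supported on
fixed faces. -/
theorem exists_add_tate_mem_fixed {K : Set (Finset α)} (hK : IsLowerSet K) {σ : Equiv.Perm α}
    (hσ : ∀ x, σ (σ x) = x) (hσK : ∀ A, A.map σ.toEmbedding ∈ K → A ∈ K)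
    (hreg : ∀ A ∈ K, A.map σ.toEmbedding = A → ∀ x ∈ A, σ x = x) {w : Finset α → ZMod 2}
    (hw : w ∈ chains K) (hdw : ∀ A, (¬ ∀ x ∈ A, σ x = x) → tate σ w A = 0) :
    ∃ v ∈ chains K, ∀ A, (¬ ∀ x ∈ A, σ x = x) → (w + tate σ v) A = 0 := by
  classical
  suffices H : ∀ k : ℕ, ∀ w ∈ chains K, (∀ A, (¬ ∀ x ∈ A, σ x = x) → tate σ w A = 0) →
      (∀ A, (¬ ∀ x ∈ A, σ x = x) → k ≤ #A → w A = 0) →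
      ∃ v ∈ chains K, ∀ A, (¬ ∀ x ∈ A, σ x = x) → (w + tate σ v) A = 0 from
    H (Fintype.card α + 1) w hw hdw fun A _ h => absurd (card_le_univ A) (by omega)
  intro k
  induction k with
  | zero =>
    intro w _ _ hlow
    exact ⟨0, zero_mem _, fun A hA => by simp [hlow A hA]⟩
  | succ k ih =>
    intro w hw hdw hlow
    let e := Fintype.equivFin (Finset α)
    have hmap := map_map_of_involutive hσ
    let v : Finset α → ZMod 2 := fun A =>
      if #A = k ∧ e A < e (A.map σ.toEmbedding) then w A else 0
    have hv : v ∈ chains K := fun A hA => by simp [v, hw A hA]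
    have hbig (A : Finset α) (hA : #A ≠ k) : v A = 0 := by simp [v, hA]
    have hbv (A : Finset α) (hA : k ≤ #A) : boundary v A = 0 := by
      rw [boundary_apply]
      refine sum_eq_zero fun x hx => hbig _ ?_
      rw [card_insert_of_notMem (by simpa using hx)]
      omega
    have hsym (A : Finset α) (hA : ¬ ∀ x ∈ A, σ x = x) (hk : #A = k) :
        w (A.map σ.toEmbedding) = w A := by
      have h := hdw A hA
      have hb : boundary w A = 0 := by
        rw [boundary_apply]
        refine sum_eq_zero fun x hx => hlow _ ?_ ?_
        · exact fun h => hA fun y hy => h y (mem_insert_of_mem hy)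
        · rw [card_insert_of_notMem (by simpa using hx)]
          omega
      rw [tate_apply, hb, zero_add] at h
      exact (CharTwo.add_eq_zero.1 h).symm
    have hvw (A : Finset α) (hA : ¬ ∀ x ∈ A, σ x = x) (hk : #A = k) :
        v A + v (A.map σ.toEmbedding) = w A := by
      simp only [v, hmap, card_map, hsym A hA hk, hk, true_and]
      by_cases hAK : A ∈ K
      · have hne : e A ≠ e (A.map σ.toEmbedding) := fun h =>
          hA (hreg A hAK (e.injective h).symm)
        rcases lt_or_gt_of_ne hne with h | h
        · simp [h, h.not_gt]
        · simp [h, h.not_gt]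
      · simp [hw A hAK]
    obtain ⟨u, hu, hu'⟩ := ih (w + tate σ v) (add_mem hw (tate_mem_chains hK hσK hv))
      (fun A hA => by rw [map_add, tate_tate hσ, add_zero, hdw A hA]) (by
        intro A hA hk
        rw [Pi.add_apply, tate_apply, hbv A hk, zero_add]
        rcases hk.eq_or_lt with hk | hk
        · rw [hvw A hA hk.symm, CharTwo.add_self_eq_zero]
        · rw [hlow A hA hk, hbig A (by omega), hbig _ (by rw [card_map]; omega)]
          simp)
    refine ⟨v + u, add_mem hv hu, fun A hA => ?_⟩
    rw [map_add, ← add_assoc]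
    exact hu' A hA

/-- **Smith's theorem** for an involution acting regularly on an acyclic complex. -/
theorem Acyclic.fixed {K : Set (Finset α)} (hK : IsLowerSet K) (hac : Acyclic K)
    {σ : Equiv.Perm α} (hσ : ∀ x, σ (σ x) = x) (hσK : ∀ A, A.map σ.toEmbedding ∈ K → A ∈ K)
    (hreg : ∀ A ∈ K, A.map σ.toEmbedding = A → ∀ x ∈ A, σ x = x) :
    Acyclic {A ∈ K | ∀ x ∈ A, σ x = x} := by
  have hmapfix (A : Finset α) (hA : ∀ x ∈ A, σ x = x) : A.map σ.toEmbedding = A :=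
    eq_of_subset_of_card_le (fun y hy => by
      obtain ⟨x, hx, rfl⟩ := mem_map.1 hy
      exact (hA x hx).symm ▸ hx) (by rw [card_map])
  have htate {c : Finset α → ZMod 2} (hc : c ∈ chains {A ∈ K | ∀ x ∈ A, σ x = x}) :
      tate σ c = boundary c := by
    ext A
    rw [tate_apply]
    by_cases hA : ∀ x ∈ A, σ x = x
    · rw [hmapfix A hA, CharTwo.add_self_eq_zero, add_zero]
    · rw [hc A fun h => hA h.2, hc _ fun h => hA fun x hx =>
        σ.injective (h.2 (σ x) (mem_map_of_mem _ hx))]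
      simp
  intro z hz hdz
  have hzK : z ∈ chains K := chains_mono (fun A hA => hA.1) hz
  obtain ⟨w, hw, hwz⟩ := exists_tate_eq hK hac hσ hσK hzK ((htate hz).trans hdz)
  obtain ⟨v, hv, hwv⟩ := exists_add_tate_mem_fixed hK hσ hσK hreg hw
    fun A hA => by rw [hwz]; exact hz A fun h => hA h.2
  have hy : w + tate σ v ∈ chains {A ∈ K | ∀ x ∈ A, σ x = x} := by
    intro A hA
    by_cases hfix : ∀ x ∈ A, σ x = x
    · exact add_mem hw (tate_mem_chains hK hσK hv) A fun h => hA ⟨h, hfix⟩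
    · exact hwv A hfix
  refine ⟨_, hy, ?_⟩
  rw [← htate hy, map_add, tate_tate hσ, add_zero, hwz]

/-- The **Lefschetz fixed point theorem** modulo 2: a permutation of the vertices preserving an
acyclic complex preserves an even number of faces. -/
theorem Acyclic.even_ncard_fixed {K : Set (Finset α)} (hK : IsLowerSet K) (hac : Acyclic K)
    {g : Equiv.Perm α} (hg : ∀ A, A ∈ K ↔ A.map g.toEmbedding ∈ K) :
    Even {A ∈ K | A.map g.toEmbedding = A}.ncard := by
  classical
  let V := chains K
  let d : V →ₗ[ZMod 2] V := boundary.restrict fun c hc => boundary_mem_chains hK hc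
  let γ : V →ₗ[ZMod 2] V := (pull g).restrict fun c hc A hA => hc _ fun h => hA ((hg A).2 h)
  let π : (Finset α → ZMod 2) →ₗ[ZMod 2] V :=
    { toFun := fun c => ⟨fun A => if A ∈ K then c A else 0, fun A hA => by simp [hA]⟩
      map_add' := fun c c' => by ext A; by_cases h : A ∈ K <;> simp [h]
      map_smul' := fun r c => by ext A; by_cases h : A ∈ K <;> simp [h] }
  have hπ : π ∘ₗ V.subtype = LinearMap.id := by
    ext c A
    by_cases h : A ∈ K
    · simp [π, h]
    · simp [π, h, c.2 A h]
  have hdd (c : V) : d (d c) = 0 := Subtype.ext (boundary_boundary _)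
  have hdγ : d ∘ₗ γ = γ ∘ₗ d := by
    ext c : 1
    exact Subtype.ext (boundary_pull g _)
  let d' : V →ₗ[ZMod 2] LinearMap.ker d := d.codRestrict _ fun c => hdd c
  have hsurj : LinearMap.range d' = ⊤ := by
    rw [LinearMap.range_eq_top]
    rintro ⟨c, hc⟩
    obtain ⟨b, hb, hbc⟩ := hac c.1 c.2 (congrArg Subtype.val (LinearMap.mem_ker.1 hc))
    exact ⟨⟨b, hb⟩, Subtype.ext (Subtype.ext hbc)⟩
  obtain ⟨s, hs⟩ := d'.exists_rightInverse_of_surjective hsurj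
  have hs' (c : LinearMap.ker d) : d (s c) = c := congrArg Subtype.val (LinearMap.congr_fun hs c)
  let q : V →ₗ[ZMod 2] LinearMap.ker d := (LinearMap.id - s ∘ₗ d').codRestrict _ fun c => by
    rw [LinearMap.mem_ker, LinearMap.sub_apply, map_sub, LinearMap.comp_apply, hs']
    exact sub_self _
  let h : V →ₗ[ZMod 2] V := s ∘ₗ q
  have hdh : d ∘ₗ h + h ∘ₗ d = LinearMap.id := by
    ext c : 1
    have h1 : d (h c) = c - s (d' c) := hs' _
    have h2 : h (d c) = s (d' c) := by
      have : q (d c) = d' c := by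
        apply Subtype.ext
        have h0 : d' (d c) = 0 := Subtype.ext (hdd c)
        change d c - s (d' (d c)) = d c
        rw [h0, map_zero, sub_zero]
      exact congrArg s this
    change d (h c) + h (d c) = c
    rw [h1, h2, sub_add_cancel]
  have htr : LinearMap.trace (ZMod 2) V γ = 0 := by
    have : γ = (γ ∘ₗ d) ∘ₗ h + (γ ∘ₗ h) ∘ₗ d := by
      rw [LinearMap.comp_assoc, LinearMap.comp_assoc, ← LinearMap.comp_add, hdh, LinearMap.comp_id]
    rw [this, map_add, LinearMap.trace_comp_comm' d (γ ∘ₗ h), ← LinearMap.comp_assoc h γ d, hdγ]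
    exact CharTwo.add_self_eq_zero _
  have hfull : LinearMap.trace (ZMod 2) (Finset α → ZMod 2) (V.subtype ∘ₗ γ ∘ₗ π) = 0 := by
    rw [LinearMap.trace_comp_comm', LinearMap.comp_assoc, hπ, LinearMap.comp_id, htr]
  rw [LinearMap.trace_eq_matrix_trace (ZMod 2) (Pi.basisFun (ZMod 2) (Finset α)),
    Matrix.trace] at hfull
  have hdiag (A : Finset α) : (LinearMap.toMatrix (Pi.basisFun (ZMod 2) (Finset α))
      (Pi.basisFun (ZMod 2) (Finset α)) (V.subtype ∘ₗ γ ∘ₗ π)).diag A =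
      if A ∈ K ∧ A.map g.toEmbedding = A then 1 else 0 := by
    rw [Matrix.diag_apply, LinearMap.toMatrix_apply]
    have hgA := hg A
    simp only [Pi.basisFun_apply, Pi.basisFun_repr]
    change (if A.map g.toEmbedding ∈ K then (Pi.single A 1 : Finset α → ZMod 2)
      (A.map g.toEmbedding) else 0) = _
    by_cases hA : A ∈ K
    · by_cases hfix : A.map g.toEmbedding = A
      · rw [hfix, if_pos hA, if_pos ⟨hA, rfl⟩, Pi.single_eq_same]
      · rw [if_pos (hgA.1 hA), if_neg fun h => hfix h.2, Pi.single_eq_of_ne hfix]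
    · rw [if_neg fun h => hA (hgA.2 h), if_neg fun h => hA h.1]
  rw [sum_congr rfl fun A _ => hdiag A, sum_boole] at hfull
  rw [even_iff_two_dvd, ← CharP.cast_eq_zero_iff (ZMod 2) 2, ← hfull]
  congr 1
  rw [Set.ncard_eq_toFinset_card']
  congr 1
  ext A
  simp

end ModTwoChain

namespace ModTwoChain

open Finset

variable {X : Type*}

/-- The complex of finite chains of a family of finite sets, ordered by inclusion. -/
def chainComplex (𝒬 : Set (Finset X)) : Set (Finset (Finset X)) :=
  {𝒜 | (𝒜 : Set (Finset X)) ⊆ 𝒬 ∧ IsChain (· ⊆ ·) (𝒜 : Set (Finset X))}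

/-- The barycentric subdivision of a family `Δ` of faces; it is void if `Δ` is. -/
def orderComplex (Δ : Set (Finset X)) : Set (Finset (Finset X)) :=
  {𝒜 | ∅ ∈ Δ ∧ 𝒜 ∈ chainComplex {A ∈ Δ | A.Nonempty}}

theorem isLowerSet_chainComplex (𝒬 : Set (Finset X)) : IsLowerSet (chainComplex 𝒬) :=
  fun _ _ h h𝒜 => ⟨(coe_subset.2 h).trans h𝒜.1, h𝒜.2.mono (coe_subset.2 h)⟩

theorem isLowerSet_orderComplex (Δ : Set (Finset X)) : IsLowerSet (orderComplex Δ) :=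
  fun _ _ h h𝒜 => ⟨h𝒜.1, isLowerSet_chainComplex _ h h𝒜.2⟩

theorem acyclic_of_forall_notMem {α : Type*} [Fintype α] [DecidableEq α] {K : Set (Finset α)}
    (hK : ∀ A, A ∉ K) : Acyclic K :=
  fun c hc _ => ⟨0, zero_mem _, by ext A; simp [hc A (hK A)]⟩

theorem insert_mem_chainComplex [DecidableEq X] {𝒬 : Set (Finset X)} {𝒜 : Finset (Finset X)} {B : Finset X}
    (h𝒜 : 𝒜 ∈ chainComplex 𝒬) (hB : B ∈ 𝒬) (h : ∀ A ∈ 𝒜, A ⊆ B ∨ B ⊆ A) :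
    insert B 𝒜 ∈ chainComplex 𝒬 := by
  refine ⟨?_, ?_⟩
  · rw [coe_insert]
    exact Set.insert_subset hB h𝒜.1
  · rw [coe_insert]
    exact h𝒜.2.insert fun A hA _ => (h A hA).symm

variable [Fintype X] [DecidableEq X]

theorem acyclic_chainComplex_of_insert_mem {x : X} (𝒬 : Set (Finset X)) (hx : {x} ∈ 𝒬)
    (hins : ∀ A ∈ 𝒬, insert x A ∈ 𝒬) : Acyclic (chainComplex (𝒬 : Set (Finset X))) := by
  induction hk : {A ∈ 𝒬 | x ∉ A}.ncard generalizing 𝒬 with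
  | zero =>
    rw [Set.ncard_eq_zero (Set.toFinite _)] at hk
    refine acyclic_of_cone {x} fun 𝒜 h𝒜 => insert_mem_chainComplex h𝒜 hx fun A hA => Or.inr ?_
    rw [singleton_subset_iff]
    by_contra hxA
    exact (hk ▸ (show A ∈ {A ∈ 𝒬 | x ∉ A} from ⟨h𝒜.1 hA, hxA⟩) : A ∈ (∅ : Set (Finset X)))
  | succ k ih =>
    have hne : {A ∈ 𝒬 | x ∉ A}.Nonempty := by
      rw [← Set.ncard_pos (Set.toFinite _)]; omega
    obtain ⟨A, hA, hmax⟩ := Set.exists_max_image _ Finset.card (Set.toFinite _) hne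
    have hAx : A ≠ insert x A := fun h => hA.2 (h ▸ mem_insert_self x A)
    refine acyclic_of_dominated (v := A) (w := insert x A) (isLowerSet_chainComplex _) hAx ?_ ?_
    · intro 𝒜 h𝒜 hA𝒜
      refine insert_mem_chainComplex h𝒜 (hins A hA.1) fun B hB => ?_
      rcases h𝒜.2.total hB hA𝒜 with h | h
      · exact Or.inl (h.trans (subset_insert x A))
      · by_cases hxB : x ∈ B
        · exact Or.inr (insert_subset hxB h)
        · have := eq_of_subset_of_card_le h (hmax B ⟨h𝒜.1 hB, hxB⟩)
          exact Or.inl (this ▸ subset_insert x A)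
    · convert ih (𝒬 \ {A}) ⟨hx, ?_⟩ ?_ ?_ using 1
      · ext 𝒜
        simp only [chainComplex, Set.mem_ofPred_eq, Set.subset_sdiff, Set.disjoint_singleton_right,
          mem_coe]
        tauto
      · rintro rfl
        exact hA.2 (mem_singleton_self x)
      · rintro B ⟨hB, _⟩
        refine ⟨hins B hB, ?_⟩
        rintro rfl
        exact hA.2 (mem_insert_self x B)
      · have : {B ∈ 𝒬 \ {A} | x ∉ B} = {B ∈ 𝒬 | x ∉ B} \ {A} := by
          ext B; simp only [Set.mem_sdiff, Set.mem_ofPred_eq, Set.mem_singleton_iff]; tauto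
        rw [this, Set.ncard_sdiff_singleton_of_mem hA, hk, Nat.add_sub_cancel]

/-- A subdivided cone is acyclic. -/
theorem acyclic_orderComplex_star (Γ : Set (Finset X)) (x : X) :
    Acyclic (orderComplex {A | insert x A ∈ Γ}) := by
  by_cases h : ∅ ∈ {A | insert x A ∈ Γ}
  · have : orderComplex {A | insert x A ∈ Γ} =
        chainComplex {A ∈ {A | insert x A ∈ Γ} | A.Nonempty} := by
      ext 𝒜; simp only [orderComplex, h, true_and]; rfl
    rw [this]
    refine acyclic_chainComplex_of_insert_mem (x := x) _ ⟨?_, singleton_nonempty x⟩ ?_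
    · simpa using h
    · rintro A ⟨hA, _⟩
      exact ⟨by simpa using hA, insert_nonempty x A⟩
  · exact acyclic_of_forall_notMem fun 𝒜 h𝒜 => h h𝒜.1

/-- If a decision tree decides membership in `Δ` of the sets between `Z` and `Y ∪ Z` without
querying all of `Y`, the corresponding complex is acyclic. -/
theorem acyclic_of_depth_lt {X : Type} [Fintype X] [DecidableEq X] {Δ : Set (Finset X)}
    (hΔ : IsLowerSet Δ) (T : DecisionTree X) (Y Z : Finset X)
    (hYZ : Disjoint Y Z)
    (hT : ∀ A ⊆ Y, T.eval (fun i => decide (i ∈ A ∪ Z)) = true ↔ A ∪ Z ∈ Δ)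
    (hd : T.depth < #Y) : Acyclic (orderComplex {A | A ⊆ Y ∧ A ∪ Z ∈ Δ}) := by
  induction T generalizing Y Z with
  | leaf b =>
    cases b with
    | false =>
      refine acyclic_of_forall_notMem fun 𝒜 h𝒜 => ?_
      have := (hT ∅ (empty_subset Y)).2 h𝒜.1.2
      simp [DecisionTree.eval] at this
    | true =>
      have hall (A : Finset X) (hA : A ⊆ Y) : A ∪ Z ∈ Δ := (hT A hA).1 rfl
      have hY : Y.Nonempty := card_pos.1 (by omega)
      refine acyclic_of_cone Y fun 𝒜 h𝒜 => ⟨h𝒜.1, insert_mem_chainComplex h𝒜.2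
        ⟨⟨Subset.rfl, hall Y Subset.rfl⟩, hY⟩ fun A hA => Or.inl (h𝒜.2.1 hA).1.1⟩
  | node x t f iht ihf =>
    have hd' : max t.depth f.depth + 1 < #Y := hd
    have heval (y : X → Bool) : (DecisionTree.node x t f).eval y =
      if y x then t.eval y else f.eval y := rfl
    by_cases hxY : x ∈ Y
    · have hxZ : x ∉ Z := disjoint_left.1 hYZ hxY
      have hcard := card_erase_of_mem hxY
      have hdel := ihf (Y.erase x) Z (hYZ.mono_left (erase_subset x Y)) (fun A hA => by
        have hxA : x ∉ A := fun h => notMem_erase x Y (hA h)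
        rw [← hT A (hA.trans (erase_subset x Y)), heval, if_neg (by simp [hxA, hxZ])]) (by omega)
      have hlk := iht (Y.erase x) (insert x Z) (by
          rw [disjoint_insert_right]
          exact ⟨notMem_erase x Y, hYZ.mono_left (erase_subset x Y)⟩) (fun A hA => by
        have h := hT (insert x A) (insert_subset hxY (hA.trans (erase_subset x Y)))
        rw [heval, if_pos (by simp)] at h
        rw [union_insert, ← insert_union, ← h]) (by omega)
      set Γ := {A | A ⊆ Y ∧ A ∪ Z ∈ Δ} with hΓ
      have hΓlow {A B : Finset X} (h : A ⊆ B) (hB : B ∈ Γ) : A ∈ Γ :=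
        ⟨h.trans hB.1, hΔ (union_subset_union_left h) hB.2⟩
      have hdelΓ {A : Finset X} : A ∈ {A | A ⊆ Y.erase x ∧ A ∪ Z ∈ Δ} ↔ A ∈ Γ ∧ x ∉ A := by
        simp only [hΓ, Set.mem_ofPred_eq, subset_erase]; tauto
      have hlkΓ {A : Finset X} : A ∈ {A | A ⊆ Y.erase x ∧ A ∪ insert x Z ∈ Δ} ↔
          insert x A ∈ Γ ∧ x ∉ A := by
        simp only [hΓ, Set.mem_ofPred_eq, subset_erase, union_insert, insert_union,
          insert_subset_iff]
        tauto
      have hunion : orderComplex Γ = orderComplex {A | A ⊆ Y.erase x ∧ A ∪ Z ∈ Δ} ∪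
          orderComplex {A | insert x A ∈ Γ} := by
        ext 𝒜
        constructor
        · rintro ⟨h0, h1, h2⟩
          by_cases hx : ∃ A ∈ 𝒜, x ∈ A
          · obtain ⟨A, hA, hxA⟩ := hx
            refine Or.inr ⟨hΓlow (insert_subset hxA (empty_subset _)) (h1 hA).1,
              fun B hB => ⟨?_, (h1 hB).2⟩, h2⟩
            rcases h2.total hA hB with h | h
            · rw [Set.mem_ofPred_eq, insert_eq_of_mem (h hxA)]
              exact (h1 hB).1
            · exact hΓlow (insert_subset hxA h) (h1 hA).1
          · push Not at hx
            exact Or.inl ⟨hdelΓ.2 ⟨h0, notMem_empty x⟩,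
              fun A hA => ⟨hdelΓ.2 ⟨(h1 hA).1, hx A hA⟩, (h1 hA).2⟩, h2⟩
        · rintro (⟨h0, h1, h2⟩ | ⟨h0, h1, h2⟩)
          · exact ⟨(hdelΓ.1 h0).1, fun A hA => ⟨(hdelΓ.1 (h1 hA).1).1, (h1 hA).2⟩, h2⟩
          · exact ⟨hΓlow (subset_insert x _) h0,
              fun A hA => ⟨hΓlow (subset_insert x _) (h1 hA).1, (h1 hA).2⟩, h2⟩
      have hinter : orderComplex {A | A ⊆ Y.erase x ∧ A ∪ Z ∈ Δ} ∩
          orderComplex {A | insert x A ∈ Γ} =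
          orderComplex {A | A ⊆ Y.erase x ∧ A ∪ insert x Z ∈ Δ} := by
        ext 𝒜
        constructor
        · rintro ⟨⟨h0, h1, h2⟩, ⟨h0', h1', -⟩⟩
          exact ⟨hlkΓ.2 ⟨h0', notMem_empty x⟩,
            fun A hA => ⟨hlkΓ.2 ⟨(h1' hA).1, (hdelΓ.1 (h1 hA).1).2⟩, (h1 hA).2⟩, h2⟩
        · rintro ⟨h0, h1, h2⟩
          exact ⟨⟨hdelΓ.2 ⟨hΓlow (subset_insert x _) (hlkΓ.1 h0).1, notMem_empty x⟩,
            fun A hA => ⟨hdelΓ.2 ⟨hΓlow (subset_insert x _) (hlkΓ.1 (h1 hA).1).1,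
              (hlkΓ.1 (h1 hA).1).2⟩, (h1 hA).2⟩, h2⟩,
            (hlkΓ.1 h0).1, fun A hA => ⟨(hlkΓ.1 (h1 hA).1).1, (h1 hA).2⟩, h2⟩
      rw [hunion]
      exact Acyclic.union (isLowerSet_orderComplex _) (isLowerSet_orderComplex _) hdel
        (acyclic_orderComplex_star Γ x) (hinter ▸ hlk)
    · by_cases hxZ : x ∈ Z
      · refine iht Y Z hYZ (fun A hA => ?_) (by omega)
        rw [← hT A hA, heval, if_pos (by simp [hxZ])]
      · refine ihf Y Z hYZ (fun A hA => ?_) (by omega)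
        have hxA : x ∉ A := fun h => hxY (hA h)
        rw [← hT A hA, heval, if_neg (by simp [hxA, hxZ])]

end ModTwoChain

namespace ModTwoChain

open Finset

variable {X : Type*}

/-- The number of chains in a down-closed family of nonempty members of a family closed under
relative complements is congruent modulo 2 to the number of members of the family, counting the
empty set. -/
theorem even_card_chains_iff [Fintype X] [DecidableEq X] {J : Set (Finset X)}
    (hJ : ∀ A ∈ J, ∀ B ∈ J, B ⊆ A → A \ B ∈ J) (𝒬 : Finset (Finset X))
    (h𝒬J : ∀ A ∈ 𝒬, A ∈ J ∧ A.Nonempty)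
    (h𝒬 : ∀ A ∈ 𝒬, ∀ B ∈ J, B.Nonempty → B ⊆ A → B ∈ 𝒬) :
    Even (chainComplex (𝒬 : Set (Finset X))).ncard ↔ Even (#𝒬 + 1) := by
  induction 𝒬 using Finset.strongInduction with
  | H 𝒬 ih =>
    rcases 𝒬.eq_empty_or_nonempty with rfl | hne
    · have : chainComplex ((∅ : Finset (Finset X)) : Set (Finset X)) = {∅} := by
        ext 𝒜
        simp only [chainComplex, coe_empty, Set.subset_empty_iff, coe_eq_empty,
          Set.mem_ofPred_eq, Set.mem_singleton_iff]
        refine ⟨fun h => h.1, fun h => ⟨h, ?_⟩⟩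
        subst h
        simp
      rw [this]; simp
    · obtain ⟨A, hA, hmax⟩ := exists_max_image 𝒬 card hne
      have hmax' {B : Finset X} (hB : B ∈ 𝒬) (h : A ⊆ B) : B = A :=
        (eq_of_subset_of_card_le h (hmax B hB)).symm
      have h1 := ih (𝒬.erase A) (erase_ssubset hA) (fun B hB => h𝒬J B (mem_of_mem_erase hB)) (by
        intro B hB C hC hC0 hCB
        refine mem_erase.2 ⟨?_, h𝒬 B (mem_of_mem_erase hB) C hC hC0 hCB⟩
        rintro rfl
        exact (mem_erase.1 hB).1 (hmax' (mem_of_mem_erase hB) hCB))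
      have hlt : {B ∈ 𝒬 | B ⊂ A} ⊂ 𝒬 :=
        filter_ssubset.2 ⟨A, hA, fun h => h.ne rfl⟩
      have h2 := ih {B ∈ 𝒬 | B ⊂ A} hlt (fun B hB => h𝒬J B (mem_filter.1 hB).1) (by
        intro B hB C hC hC0 hCB
        rw [mem_filter] at hB ⊢
        exact ⟨h𝒬 B hB.1 C hC hC0 hCB, hCB.trans_ssubset hB.2⟩)
      have heven : Even #{B ∈ 𝒬 | B ⊂ A} := by
        rw [← ZMod.natCast_eq_zero_iff_even, ← nsmul_one, ← sum_const]
        refine sum_involution (fun B _ => A \ B) (fun B _ => ?_) (fun B hB _ h => ?_)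
          (fun B hB => ?_) (fun B hB => ?_)
        · decide
        · have hB' := mem_filter.1 hB
          obtain ⟨x, hx⟩ := (h𝒬J B hB'.1).2
          exact (mem_sdiff.1 (h.symm ▸ hx : x ∈ A \ B)).2 hx
        · have hB' := mem_filter.1 hB
          have hne : (A \ B).Nonempty := sdiff_nonempty.2 hB'.2.2
          have hsub : A \ B ⊂ A := by
            refine sdiff_ssubset hB'.2.1 (h𝒬J B hB'.1).2
          exact mem_filter.2 ⟨h𝒬 A hA _ (hJ A (h𝒬J A hA).1 B (h𝒬J B hB'.1).1 hB'.2.1) hne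
            hsub.1, hsub⟩
        · exact Finset.sdiff_sdiff_eq_self (mem_filter.1 hB).2.1
      have hsplit : chainComplex (𝒬 : Set (Finset X)) =
          chainComplex ((𝒬.erase A : Finset (Finset X)) : Set (Finset X)) ∪
          insert A '' chainComplex (({B ∈ 𝒬 | B ⊂ A} : Finset (Finset X)) : Set (Finset X)) := by
        ext 𝒜
        constructor
        · intro h𝒜
          by_cases hA𝒜 : A ∈ 𝒜
          · refine Or.inr ⟨𝒜.erase A, ⟨fun B hB => ?_, h𝒜.2.mono (coe_subset.2 (erase_subset A 𝒜))⟩,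
              insert_erase hA𝒜⟩
            have hB' := mem_erase.1 (mem_coe.1 hB)
            refine mem_coe.2 (mem_filter.2 ⟨h𝒜.1 hB'.2, ?_⟩)
            rcases h𝒜.2.total hB'.2 hA𝒜 with h | h
            · exact h.ssubset_of_ne hB'.1
            · exact absurd (hmax' (h𝒜.1 hB'.2) h) hB'.1
          · exact Or.inl ⟨fun B hB => mem_coe.2 (mem_erase.2
              ⟨fun h => hA𝒜 (h ▸ mem_coe.1 hB), h𝒜.1 hB⟩), h𝒜.2⟩
        · rintro (h𝒜 | ⟨ℬ, hℬ, rfl⟩)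
          · exact ⟨h𝒜.1.trans (coe_subset.2 (erase_subset A 𝒬)), h𝒜.2⟩
          · refine insert_mem_chainComplex
              ⟨hℬ.1.trans (coe_subset.2 (filter_subset _ 𝒬)), hℬ.2⟩ hA fun B hB => Or.inl ?_
            exact (mem_filter.1 (hℬ.1 hB)).2.1
      have hnot {ℬ : Finset (Finset X)}
          (hℬ : ℬ ∈ chainComplex (({B ∈ 𝒬 | B ⊂ A} : Finset (Finset X)) : Set (Finset X))) :
          A ∉ ℬ := fun h => (mem_filter.1 (hℬ.1 h)).2.ne rfl
      have hinj : Set.InjOn (insert A)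
          (chainComplex (({B ∈ 𝒬 | B ⊂ A} : Finset (Finset X)) : Set (Finset X))) := by
        intro ℬ hℬ 𝒞 h𝒞 h
        rw [← erase_insert (hnot hℬ), ← erase_insert (hnot h𝒞), h]
      have hdisj : Disjoint (chainComplex ((𝒬.erase A : Finset (Finset X)) : Set (Finset X)))
          (insert A '' chainComplex (({B ∈ 𝒬 | B ⊂ A} : Finset (Finset X)) :
            Set (Finset X))) := by
        rw [Set.disjoint_left]
        rintro _ h ⟨ℬ, -, rfl⟩
        exact (mem_erase.1 (h.1 (mem_insert_self A ℬ))).1 rfl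
      rw [hsplit, Set.ncard_union_eq hdisj (Set.toFinite _) (Set.toFinite _),
        hinj.ncard_image, Nat.even_add, h1, h2, ← card_erase_add_one hA]
      simp only [Nat.even_add_one, heven]
      tauto

theorem map_eq_self_of_isChain {𝒜 : Finset (Finset X)} {σ : Equiv.Perm X}
    (h𝒜 : IsChain (· ⊆ ·) (𝒜 : Set (Finset X)))
    (h : 𝒜.map σ.finsetCongr.toEmbedding = 𝒜) {A : Finset X} (hA : A ∈ 𝒜) :
    A.map σ.toEmbedding = A := by
  have hA' : A.map σ.toEmbedding ∈ 𝒜 := by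
    rw [← h]
    exact mem_map_of_mem _ hA
  rcases h𝒜.total hA' hA with h | h
  · exact eq_of_subset_of_card_le h (card_map _).ge
  · exact (eq_of_subset_of_card_le h (card_map _).le).symm

theorem mem_orderComplex_of_map_mem {Δ : Set (Finset X)} {σ : Equiv.Perm X}
    (hσ : ∀ A : Finset X, A.map σ.toEmbedding ∈ Δ → A ∈ Δ) {𝒜 : Finset (Finset X)}
    (h𝒜 : 𝒜.map σ.finsetCongr.toEmbedding ∈ orderComplex Δ) : 𝒜 ∈ orderComplex Δ := by
  have hmem {A : Finset X} (hA : A ∈ 𝒜) :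
      A.map σ.toEmbedding ∈ 𝒜.map σ.finsetCongr.toEmbedding := mem_map_of_mem _ hA
  refine ⟨h𝒜.1, fun A hA => ⟨hσ A (h𝒜.2.1 (hmem hA)).1, map_nonempty.1 (h𝒜.2.1 (hmem hA)).2⟩,
    fun A hA B hB _ => ?_⟩
  exact (h𝒜.2.2.total (hmem hA) (hmem hB)).imp map_subset_map.1 map_subset_map.1

theorem map_mem_orderComplex {Δ : Set (Finset X)} {σ : Equiv.Perm X}
    (hσ : ∀ A : Finset X, A ∈ Δ → A.map σ.toEmbedding ∈ Δ) {𝒜 : Finset (Finset X)}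
    (h𝒜 : 𝒜 ∈ orderComplex Δ) : 𝒜.map σ.finsetCongr.toEmbedding ∈ orderComplex Δ := by
  refine mem_orderComplex_of_map_mem (σ := σ⁻¹) (fun A hA => ?_) ?_
  · have := hσ _ hA
    rwa [map_map, show (σ⁻¹).toEmbedding.trans σ.toEmbedding = Function.Embedding.refl X by
      ext x; simp, map_refl] at this
  · rw [map_map, show σ.finsetCongr.toEmbedding.trans (σ⁻¹).finsetCongr.toEmbedding =
      Function.Embedding.refl _ by
        ext A : 1
        simp only [Function.Embedding.trans_apply, Equiv.coe_toEmbedding, Equiv.finsetCongr_apply,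
          map_map, Function.Embedding.refl_apply]
        rw [show σ.toEmbedding.trans (σ⁻¹).toEmbedding = Function.Embedding.refl X by
          ext x; simp, map_refl], map_refl]
    exact h𝒜

/-- If a monotone decreasing property is decided with fewer queries than there are variables,
then it has an even number of members invariant under commuting involutions and a further
permutation normalising them. -/
theorem even_ncard_invariant {X : Type} [Fintype X] [DecidableEq X] {Δ : Set (Finset X)}
    (hΔ : IsLowerSet Δ) (T : DecisionTree X)
    (hT : ∀ A : Finset X, T.eval (fun i => decide (i ∈ A)) = true ↔ A ∈ Δ)
    (hd : T.depth < Fintype.card X) (S : Finset (Equiv.Perm X))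
    (hS : ∀ σ ∈ S, ∀ x, σ (σ x) = x) (hcomm : ∀ σ ∈ S, ∀ τ ∈ S, ∀ x, σ (τ x) = τ (σ x))
    (hSΔ : ∀ σ ∈ S, ∀ A : Finset X, A ∈ Δ → A.map σ.toEmbedding ∈ Δ) (g : Equiv.Perm X)
    (hgΔ : ∀ A : Finset X, A ∈ Δ ↔ A.map g.toEmbedding ∈ Δ)
    (hgS : ∀ σ ∈ S, ∃ τ ∈ S, ∀ x, τ (g x) = g (σ x))
    (hgS' : ∀ σ ∈ S, ∃ τ ∈ S, ∀ x, g (τ x) = σ (g x)) :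
    Even {A ∈ Δ | (∀ σ ∈ S, A.map σ.toEmbedding = A) ∧ A.map g.toEmbedding = A}.ncard := by
  by_cases h0 : ∅ ∈ Δ
  swap
  · have : {A ∈ Δ | (∀ σ ∈ S, A.map σ.toEmbedding = A) ∧ A.map g.toEmbedding = A} = ∅ := by
      rw [Set.eq_empty_iff_forall_notMem]
      exact fun A hA => h0 (hΔ (empty_subset A) hA.1)
    simp [this]
  have hmapmap {σ τ σ' τ' : Equiv.Perm X} (h : ∀ x, σ (τ x) = σ' (τ' x)) (A : Finset X) :
      (A.map τ.toEmbedding).map σ.toEmbedding = (A.map τ'.toEmbedding).map σ'.toEmbedding := by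
    rw [map_map, map_map]
    congr 1
    ext x
    exact h x
  have hinvol {σ : Equiv.Perm X} (hσ : ∀ x, σ (σ x) = x) (A : Finset X) :
      (A.map σ.toEmbedding).map σ.toEmbedding = A := by
    rw [map_map, show σ.toEmbedding.trans σ.toEmbedding = Function.Embedding.refl X by
      ext x; exact hσ x, map_refl]
  have hac0 : Acyclic (orderComplex Δ) := by
    have := acyclic_of_depth_lt hΔ T univ ∅ (by simp) (by simpa using hT) (by simpa using hd)
    simpa using this
  have hfix (S' : Finset (Equiv.Perm X)) (hS' : S' ⊆ S) : Acyclic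
      {𝒜 ∈ orderComplex Δ | ∀ A ∈ 𝒜, ∀ σ ∈ S', A.map σ.toEmbedding = A} := by
    induction S' using Finset.induction_on with
    | empty => simpa using hac0
    | insert σ S' _ ih =>
      have hσS : σ ∈ S := hS' (mem_insert_self σ S')
      have hlow : IsLowerSet
          {𝒜 ∈ orderComplex Δ | ∀ A ∈ 𝒜, ∀ σ ∈ S', A.map σ.toEmbedding = A} :=
        fun _ _ h h𝒜 => ⟨isLowerSet_orderComplex Δ h h𝒜.1, fun A hA => h𝒜.2 A (h hA)⟩
      have := Acyclic.fixed (σ := σ.finsetCongr) hlow (ih ((subset_insert σ S').trans hS'))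
        (fun A => hinvol (hS σ hσS) A) (fun 𝒜 h𝒜 => ⟨mem_orderComplex_of_map_mem
          (fun A hA => by simpa only [hinvol (hS σ hσS)] using hSΔ σ hσS _ hA) h𝒜.1,
          fun A hA τ hτ => ?_⟩) (fun 𝒜 h𝒜 h A hA => map_eq_self_of_isChain h𝒜.1.2.2 h hA)
      · convert this using 1
        ext 𝒜
        simp only [Set.mem_ofPred_eq, mem_insert, forall_eq_or_imp, Equiv.finsetCongr_apply]
        exact ⟨fun h => ⟨⟨h.1, fun A hA => (h.2 A hA).2⟩, fun A hA => (h.2 A hA).1⟩,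
          fun h => ⟨h.1.1, fun A hA => ⟨h.2 A hA, h.1.2 A hA⟩⟩⟩
      · have h1 := h𝒜.2 _ (mem_map_of_mem _ hA) τ hτ
        simp only [Equiv.coe_toEmbedding, Equiv.finsetCongr_apply] at h1
        rw [hmapmap (hcomm τ (hS' (mem_insert_of_mem hτ)) σ hσS)] at h1
        exact map_injective _ h1
  have hlow : IsLowerSet {𝒜 ∈ orderComplex Δ | ∀ A ∈ 𝒜, ∀ σ ∈ S, A.map σ.toEmbedding = A} :=
    fun _ _ h h𝒜 => ⟨isLowerSet_orderComplex Δ h h𝒜.1, fun A hA => h𝒜.2 A (h hA)⟩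
  have hev := Acyclic.even_ncard_fixed (g := g.finsetCongr) hlow (hfix S Subset.rfl) (by
    intro 𝒜
    constructor
    · intro h𝒜
      refine ⟨map_mem_orderComplex (fun A => (hgΔ A).1) h𝒜.1, fun A hA σ hσ => ?_⟩
      obtain ⟨A, hA', rfl⟩ := mem_map.1 hA
      obtain ⟨τ, hτ, h⟩ := hgS' σ hσ
      simp only [Equiv.coe_toEmbedding, Equiv.finsetCongr_apply]
      rw [hmapmap (fun x => (h x).symm), h𝒜.2 A hA' τ hτ]
    · intro h𝒜
      refine ⟨mem_orderComplex_of_map_mem (fun A => (hgΔ A).2) h𝒜.1, fun A hA σ hσ => ?_⟩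
      obtain ⟨τ, hτ, h⟩ := hgS σ hσ
      have h1 := h𝒜.2 _ (mem_map_of_mem _ hA) τ hτ
      simp only [Equiv.coe_toEmbedding, Equiv.finsetCongr_apply] at h1
      rw [hmapmap h] at h1
      exact map_injective _ h1)
  set J := {A ∈ Δ | (∀ σ ∈ S, A.map σ.toEmbedding = A) ∧ A.map g.toEmbedding = A} with hJ
  classical
  have hchains := even_card_chains_iff (J := J) (fun A hA B hB _ =>
    ⟨hΔ sdiff_subset hA.1, fun σ hσ => by rw [Finset.map_sdiff, hA.2.1 σ hσ, hB.2.1 σ hσ],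
      by rw [Finset.map_sdiff, hA.2.2, hB.2.2]⟩) (J.toFinset.erase ∅) (by
      intro A hA
      rw [mem_erase, Set.mem_toFinset] at hA
      exact ⟨hA.2, nonempty_iff_ne_empty.2 hA.1⟩) (by
      intro A _ B hB hB0 _
      rw [mem_erase, Set.mem_toFinset]
      exact ⟨hB0.ne_empty, hB⟩)
  have h0J : ∅ ∈ J.toFinset := by simp [hJ, h0]
  rw [card_erase_add_one h0J, ← Set.ncard_eq_toFinset_card'] at hchains
  rw [← hchains]
  convert hev using 2
  ext 𝒜
  constructor
  · intro h
    have h' {A : Finset X} (hA : A ∈ 𝒜) : A ∈ J ∧ A.Nonempty := by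
      have := h.1 hA
      rw [mem_coe, mem_erase, Set.mem_toFinset] at this
      exact ⟨this.2, nonempty_iff_ne_empty.2 this.1⟩
    refine ⟨⟨⟨h0, fun A hA => ⟨(h' hA).1.1, (h' hA).2⟩, h.2⟩, fun A hA => (h' hA).1.2.1⟩, ?_⟩
    conv_rhs => rw [← map_refl (s := 𝒜)]
    ext B
    simp only [mem_map, Equiv.coe_toEmbedding, Equiv.finsetCongr_apply,
      Function.Embedding.refl_apply]
    exact exists_congr fun A => and_congr_right fun hA => by rw [(h' hA).1.2.2]
  · rintro ⟨⟨h1, h2⟩, h3⟩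
    refine ⟨fun A hA => ?_, h1.2.2⟩
    rw [mem_coe, mem_erase, Set.mem_toFinset]
    exact ⟨(h1.2.1 hA).2.ne_empty, (h1.2.1 hA).1, h2 A hA, map_eq_self_of_isChain h1.2.2 h3 hA⟩

end ModTwoChain

section Parity

open Finset

/-- A set of graphs preserved by a 2-group has as many members, modulo 2, as it has invariant
members. -/
theorem ncard_modEq_ncard_invariant {ι Γ : Type*} [Finite ι] [Group Γ] [Finite Γ]
    (hΓ : IsPGroup 2 Γ) (ρ : Γ →* Equiv.Perm ι) (𝒢 : Set (SimpleGraph ι))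
    (h𝒢 : ∀ γ, ∀ G ∈ 𝒢, G.comap (ρ γ) ∈ 𝒢) :
    𝒢.ncard ≡ {G ∈ 𝒢 | ∀ γ, G.comap (ρ γ) = G}.ncard [MOD 2] := by
  let _ : MulAction Γ 𝒢 :=
    { smul := fun γ G => ⟨G.1.comap (ρ γ⁻¹), h𝒢 γ⁻¹ G.1 G.2⟩
      one_smul := fun G => Subtype.ext (by
        change G.1.comap (ρ 1⁻¹) = G.1
        ext; simp)
      mul_smul := fun γ δ G => Subtype.ext (by
        change G.1.comap (ρ (γ * δ)⁻¹) = (G.1.comap (ρ δ⁻¹)).comap (ρ γ⁻¹)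
        ext; simp [mul_inv_rev, map_mul]) }
  have : Fact (Nat.Prime 2) := ⟨Nat.prime_two⟩
  have : Finite 𝒢 := Set.toFinite 𝒢
  have hfix (G : 𝒢) : G ∈ MulAction.fixedPoints Γ 𝒢 ↔ ∀ γ, G.1.comap (ρ γ) = G.1 := by
    refine ⟨fun h γ => ?_, fun h γ => Subtype.ext (h γ⁻¹)⟩
    have : G.1.comap (ρ γ⁻¹⁻¹) = G.1 := congrArg Subtype.val (h γ⁻¹)
    rwa [inv_inv] at this
  have key := hΓ.card_modEq_card_fixedPoints 𝒢
  have hcard : Nat.card (MulAction.fixedPoints Γ 𝒢) =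
      {G ∈ 𝒢 | ∀ γ, G.comap (ρ γ) = G}.ncard := by
    rw [Nat.card_coe_set_eq, ← Set.ncard_image_of_injective _ Subtype.val_injective]
    congr 1
    ext G
    simp only [Set.mem_image, hfix, Set.mem_ofPred_eq]
    exact ⟨by rintro ⟨G, h, rfl⟩; exact ⟨G.2, h⟩, fun h => ⟨⟨G, h.1⟩, h.2, rfl⟩⟩
  rwa [hcard, Nat.card_coe_set_eq] at key

/-- The elements of `ℤ/2ᵐ` of 2-adic valuation `l`. -/
def HasLevel {m : ℕ} (l : ℕ) (x : ZMod (2 ^ m)) : Prop :=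
  ∃ u : (ZMod (2 ^ m))ˣ, x = u * 2 ^ l

variable {m : ℕ}

theorem exists_hasLevel {x : ZMod (2 ^ m)} (hx : x ≠ 0) : ∃ l < m, HasLevel l x := by
  have hx0 : x.val ≠ 0 := by rwa [ne_eq, ZMod.val_eq_zero]
  obtain ⟨l, q, hq, h⟩ := Nat.exists_eq_two_pow_mul_odd hx0
  refine ⟨l, ?_, ZMod.unitOfCoprime q ((Nat.coprime_two_right.2 hq).pow_right m), ?_⟩
  · rw [← Nat.pow_lt_pow_iff_right (a := 2) one_lt_two]
    refine lt_of_le_of_lt ?_ (ZMod.val_lt x)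
    rw [h]
    exact Nat.le_mul_of_pos_right _ hq.pos
  · rw [ZMod.coe_unitOfCoprime, ← ZMod.natCast_zmod_val x, h]
    push_cast
    ring

theorem HasLevel.neg {l : ℕ} {x : ZMod (2 ^ m)} (h : HasLevel l x) : HasLevel l (-x) := by
  obtain ⟨u, rfl⟩ := h
  exact ⟨-u, by simp⟩

theorem two_pow_ne_zero {l : ℕ} (hl : l < m) : (2 : ZMod (2 ^ m)) ^ l ≠ 0 := by
  intro h
  have h' : ((2 ^ l : ℕ) : ZMod (2 ^ m)) = 0 := by exact_mod_cast h
  rw [ZMod.natCast_eq_zero_iff, Nat.pow_dvd_pow_iff_le_right (by norm_num)] at h'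
  omega

theorem HasLevel.ne_zero {l : ℕ} (hl : l < m) {x : ZMod (2 ^ m)} (h : HasLevel l x) : x ≠ 0 := by
  obtain ⟨u, rfl⟩ := h
  rw [ne_eq, Units.mul_right_eq_zero]
  exact two_pow_ne_zero hl

theorem HasLevel.le {l k : ℕ} (hl : l < m) {x : ZMod (2 ^ m)} (h : HasLevel l x)
    (h' : HasLevel k x) : k ≤ l := by
  by_contra! hlk
  obtain ⟨u, hu⟩ := h
  obtain ⟨v, hv⟩ := h'
  have h1 : x * 2 ^ (m - 1 - l) = u * 2 ^ (m - 1) := by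
    rw [hu, mul_assoc, ← pow_add]
    congr 2
    omega
  have h2 : x * 2 ^ (m - 1 - l) = 0 := by
    rw [hv, mul_assoc, ← pow_add, show k + (m - 1 - l) = m + (k - l - 1) by omega, pow_add]
    have : (2 : ZMod (2 ^ m)) ^ m = 0 := by
      exact_mod_cast ZMod.natCast_self (2 ^ m)
    rw [this, zero_mul, mul_zero]
  rw [h1, Units.mul_right_eq_zero] at h2
  exact two_pow_ne_zero (by omega) h2

theorem HasLevel.testBit_ne {l : ℕ} (hl : l < m) {x y : ZMod (2 ^ m)} (h : HasLevel l (x - y)) :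
    x.val.testBit l ≠ y.val.testBit l := by
  obtain ⟨u, hu⟩ := h
  intro hxy
  have hcast : ((x.val : ℕ) : ZMod (2 ^ m)) = ((y.val + (u : ZMod (2 ^ m)).val * 2 ^ l : ℕ) :
      ZMod (2 ^ m)) := by
    push_cast
    rw [ZMod.natCast_zmod_val, ZMod.natCast_zmod_val, ZMod.natCast_zmod_val, ← hu]
    ring
  rw [ZMod.natCast_eq_natCast_iff] at hcast
  have hmod : x.val ≡ y.val + (u : ZMod (2 ^ m)).val * 2 ^ l [MOD 2 ^ (l + 1)] :=
    hcast.of_dvd (pow_dvd_pow 2 hl)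
  have hodd : Odd (u : ZMod (2 ^ m)).val := by
    have := ZMod.val_coe_unit_coprime u
    rwa [Nat.coprime_pow_right_iff (by omega), Nat.coprime_two_right] at this
  have hdiv : x.val / 2 ^ l % 2 = (y.val + (u : ZMod (2 ^ m)).val * 2 ^ l) / 2 ^ l % 2 := by
    have := congrArg (· / 2 ^ l) hmod
    simpa only [pow_succ, Nat.mod_mul_right_div_self] using this
  rw [Nat.add_mul_div_right _ _ (by positivity)] at hdiv
  simp only [Nat.testBit_eq_decide_div_mod_eq, decide_eq_decide] at hxy
  rcases hodd with ⟨q, hq⟩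
  omega

/-- The element of `ℤ/2ᵐ` with prescribed binary digits at the positions in `L`. -/
def ofDigits (m : ℕ) (L : Finset ℕ) (b : ℕ → Bool) : ZMod (2 ^ m) :=
  ∑ l ∈ L, if b l then 2 ^ l else 0

theorem exists_hasLevel_ofDigits_sub (L : Finset ℕ) (b c : ℕ → Bool)
    (h : ∃ l ∈ L, b l ≠ c l) : ∃ l ∈ L, HasLevel l (ofDigits m L b - ofDigits m L c) := by
  classical
  have hfind : ∃ l, l ∈ L ∧ b l ≠ c l := h
  set k := Nat.find hfind with hk
  obtain ⟨hkL, hkne⟩ := Nat.find_spec hfind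
  have hmin {l : ℕ} (hl : l ∈ L) (hlk : l < k) : b l = c l := by
    by_contra hne
    exact Nat.find_min hfind hlk ⟨hl, hne⟩
  refine ⟨k, hkL, ?_⟩
  have hterm (l : ℕ) (hl : l ∈ L.erase k) : (2 : ZMod (2 ^ m)) ^ (k + 1) ∣
      (if b l then 2 ^ l else 0) - (if c l then 2 ^ l else 0) := by
    obtain ⟨hlk, hlL⟩ := mem_erase.1 hl
    rcases lt_or_gt_of_ne hlk with h | h
    · rw [hmin hlL h, sub_self]
      exact dvd_zero _
    · have hdvd : (2 : ZMod (2 ^ m)) ^ (k + 1) ∣ 2 ^ l := pow_dvd_pow 2 h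
      refine dvd_sub ?_ ?_ <;> split_ifs <;> first | exact hdvd | exact dvd_zero _
  obtain ⟨q, hq⟩ := dvd_sum hterm
  have hsum : ofDigits m L b - ofDigits m L c =
      ((if b k then 2 ^ k else 0) - (if c k then 2 ^ k else 0)) + 2 ^ (k + 1) * q := by
    rw [ofDigits, ofDigits, ← sum_sub_distrib, ← add_sum_erase _ _ hkL, hq]
  have hnil : IsNilpotent (2 * q) := by
    refine ⟨m, ?_⟩
    rw [mul_pow]
    have : (2 : ZMod (2 ^ m)) ^ m = 0 := by
      exact_mod_cast ZMod.natCast_self (2 ^ m)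
    rw [this, zero_mul]
  have hunit (v : (ZMod (2 ^ m))ˣ) : IsUnit ((v : ZMod (2 ^ m)) + 2 * q) :=
    hnil.isUnit_add_left_of_commute v.isUnit (Commute.all _ _)
  rw [hsum]
  rcases hb : b k with _ | _ <;> rcases hc : c k with _ | _
  · exact absurd (hb.trans hc.symm) hkne
  · obtain ⟨u, hu⟩ := hunit (-1)
    refine ⟨u, ?_⟩
    rw [hu]
    simp
    ring
  · obtain ⟨u, hu⟩ := hunit 1
    refine ⟨u, ?_⟩
    rw [hu]
    simp
    ring
  · exact absurd (hb.trans hc.symm) hkne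

end Parity

section Parity

open Finset

variable {V : Type*} {R : Type*} {m : ℕ}

/-- The graph on `ℤ/2ᵐ ⊔ R` obtained from `G` by replacing the vertex `none` by the graph on
`ℤ/2ᵐ` in which adjacency means that the level of the difference is in `L`. -/
def levelBlowUp (m : ℕ) (L : Finset ℕ) (hL : L ⊆ range m) (G : SimpleGraph (Option R)) :
    SimpleGraph (ZMod (2 ^ m) ⊕ R) where
  Adj p q := G.Adj (p.elim (fun _ => none) some) (q.elim (fun _ => none) some) ∨
    ∃ x y, p = Sum.inl x ∧ q = Sum.inl y ∧ ∃ l ∈ L, HasLevel l (x - y)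
  symm := ⟨by
    rintro p q (h | ⟨x, y, rfl, rfl, l, hl, h⟩)
    · exact Or.inl h.symm
    · exact Or.inr ⟨y, x, rfl, rfl, l, hl, by simpa using h.neg⟩⟩
  loopless := ⟨by
    rintro p (h | ⟨x, y, rfl, h, l, hl, h'⟩)
    · exact h.ne rfl
    · exact h'.ne_zero (mem_range.1 (hL hl)) (sub_eq_zero.2 (Sum.inl_injective h))⟩

/-- `H` maps to the blow-up of `G` in which the vertex `none` is replaced by a clique with
`2 ^ #L` vertices. -/
def MapsToBlowUp (H : SimpleGraph V) (L : Finset ℕ) (G : SimpleGraph (Option R)) : Prop :=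
  ∃ (f : V → Option R) (c : V → ℕ → Bool), ∀ u v, H.Adj u v →
    G.Adj (f u) (f v) ∨ f u = none ∧ f v = none ∧ ∃ l ∈ L, c u l ≠ c v l

theorem MapsToBlowUp.of_card_eq {H : SimpleGraph V} {L K : Finset ℕ} {G : SimpleGraph (Option R)}
    (hLK : #L = #K) (h : MapsToBlowUp H L G) : MapsToBlowUp H K G := by
  classical
  obtain ⟨f, c, hfc⟩ := h
  let e : L ≃ K := Finset.equivOfCardEq hLK
  refine ⟨f, fun v k => if hk : k ∈ K then c v (e.symm ⟨k, hk⟩) else false, fun u v huv => ?_⟩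
  refine (hfc u v huv).imp_right fun ⟨h1, h2, l, hl, hne⟩ => ⟨h1, h2, e ⟨l, hl⟩, (e ⟨l, hl⟩).2, ?_⟩
  simpa using hne

theorem nonempty_hom_levelBlowUp_iff (H : SimpleGraph V) {L : Finset ℕ} (hL : L ⊆ range m)
    (G : SimpleGraph (Option R)) :
    Nonempty (H →g levelBlowUp m L hL G) ↔ MapsToBlowUp H L G := by
  constructor
  · rintro ⟨g⟩
    refine ⟨fun v => (g v).elim (fun _ => none) some,
      fun v l => (g v).elim (fun x => x.val.testBit l) (fun _ => false), fun u v huv => ?_⟩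
    refine (g.map_adj huv).imp_right ?_
    rintro ⟨x, y, hx, hy, l, hl, h⟩
    simp only [hx, hy, Sum.elim_inl, true_and]
    exact ⟨l, hl, h.testBit_ne (mem_range.1 (hL hl))⟩
  · rintro ⟨f, c, hfc⟩
    let g (v : V) : ZMod (2 ^ m) ⊕ R := (f v).elim (Sum.inl (ofDigits m L (c v))) Sum.inr
    have hg (v : V) : (g v).elim (fun _ => none) some = f v := by
      rcases h : f v with _ | r <;> simp [g, h]
    refine ⟨⟨g, fun {u v} huv => ?_⟩⟩
    rcases hfc u v huv with h | ⟨hu, hv, h⟩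
    · exact Or.inl (by rwa [hg, hg])
    · exact Or.inr ⟨_, _, by simp only [g, hu]; rfl, by simp only [g, hv]; rfl,
        exists_hasLevel_ofDigits_sub L _ _ h⟩

theorem levelBlowUp_injective {L K : Finset ℕ} (hL : L ⊆ range m) (hK : K ⊆ range m)
    {G F : SimpleGraph (Option R)} (h : levelBlowUp m L hL G = levelBlowUp m K hK F) :
    L = K ∧ G = F := by
  have key {L K : Finset ℕ} (hL : L ⊆ range m) (hK : K ⊆ range m)
    {G F : SimpleGraph (Option R)} (h : levelBlowUp m L hL G = levelBlowUp m K hK F) : L ⊆ K := by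
    intro l hl
    have h1 : (levelBlowUp m L hL G).Adj (Sum.inl (2 ^ l)) (Sum.inl 0) :=
      Or.inr ⟨_, _, rfl, rfl, l, hl, 1, by simp⟩
    rw [h] at h1
    rcases h1 with h1 | ⟨x, y, hx, hy, k, hk, h2⟩
    · exact absurd rfl h1.ne
    · rw [← Sum.inl_injective hx, ← Sum.inl_injective hy, sub_zero] at h2
      have h3 : HasLevel l ((2 : ZMod (2 ^ m)) ^ l) := ⟨1, by simp⟩
      have := le_antisymm (h3.le (mem_range.1 (hL hl)) h2) (h2.le (mem_range.1 (hK hk)) h3)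
      exact this ▸ hk
  refine ⟨(key hL hK h).antisymm (key hK hL h.symm), ?_⟩
  have hcomap {L : Finset ℕ} (hL : L ⊆ range m) (G : SimpleGraph (Option R)) :
      (levelBlowUp m L hL G).comap (fun o => o.elim (Sum.inl 0) Sum.inr) = G := by
    ext a b
    have hπ (a : Option R) : Sum.elim (fun _ => none) some
        (a.elim (Sum.inl (0 : ZMod (2 ^ m))) Sum.inr) = a := by cases a <;> rfl
    simp only [SimpleGraph.comap_adj, levelBlowUp, hπ, or_iff_left_iff_imp]
    rintro ⟨x, y, hx, hy, l, hl, h⟩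
    have h0 {a : Option R} {x : ZMod (2 ^ m)}
        (h : a.elim (Sum.inl (0 : ZMod (2 ^ m))) Sum.inr = Sum.inl x) : x = 0 := by
      cases a with
      | none => exact (Sum.inl_injective h).symm
      | some r => exact absurd h Sum.inr_ne_inl
    exact absurd (by rw [h0 hx, h0 hy, sub_zero]) (h.ne_zero (mem_range.1 (hL hl)))
  rw [← hcomap hL G, h, hcomap hK F]

/-- Translations of `ℤ/2ᵐ`, acting on `ℤ/2ᵐ ⊔ R`. -/
def shiftHom (m : ℕ) (R : Type*) :
    Multiplicative (ZMod (2 ^ m)) →* Equiv.Perm (ZMod (2 ^ m) ⊕ R) where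
  toFun a := Equiv.sumCongr (Equiv.addLeft a.toAdd) (Equiv.refl R)
  map_one' := by ext (x | x) <;> simp
  map_mul' a b := by ext (x | x) <;> simp [add_assoc]

/-- Multiplication by units of `ℤ/2ᵐ`, acting on `ℤ/2ᵐ ⊔ R`. -/
def unitsHom (m : ℕ) (R : Type*) :
    (ZMod (2 ^ m))ˣ →* Equiv.Perm (ZMod (2 ^ m) ⊕ R) where
  toFun u := Equiv.sumCongr (Units.mulLeft u) (Equiv.refl R)
  map_one' := by ext (x | x) <;> simp
  map_mul' a b := by ext (x | x) <;> simp [mul_assoc]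

theorem exists_eq_levelBlowUp {G : SimpleGraph (ZMod (2 ^ m) ⊕ R)}
    (hs : ∀ a, G.comap (shiftHom m R a) = G) (hu : ∀ a, G.comap (unitsHom m R a) = G) :
    ∃ L, ∃ hL : L ⊆ range m, ∃ F, G = levelBlowUp m L hL F := by
  classical
  have hs' (a : ZMod (2 ^ m)) (p q) : G.Adj (shiftHom m R (.ofAdd a) p) (shiftHom m R (.ofAdd a) q)
      ↔ G.Adj p q := by
    rw [← SimpleGraph.comap_adj (G := G), hs]
  have hu' (a : (ZMod (2 ^ m))ˣ) (p q) : G.Adj (unitsHom m R a p) (unitsHom m R a q)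
      ↔ G.Adj p q := by
    rw [← SimpleGraph.comap_adj (G := G), hu]
  have hlevel {l : ℕ} {x y : ZMod (2 ^ m)} (h : HasLevel l (x - y)) :
      G.Adj (.inl x) (.inl y) ↔ G.Adj (.inl (2 ^ l)) (.inl 0) := by
    obtain ⟨u, hu''⟩ := h
    rw [← hu' u (.inl (2 ^ l)), ← hs' y (unitsHom m R u (.inl (2 ^ l)))]
    simp [shiftHom, unitsHom, ← hu'']
  have hcross (x : ZMod (2 ^ m)) (r : R) : G.Adj (.inl x) (.inr r) ↔ G.Adj (.inl 0) (.inr r) := by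
    rw [← hs' x (.inl 0)]
    simp [shiftHom]
  refine ⟨{l ∈ range m | G.Adj (.inl (2 ^ l)) (.inl 0)}, filter_subset _ _,
    G.comap (fun o => o.elim (Sum.inl 0) Sum.inr), ?_⟩
  ext p q
  rcases p with x | r <;> rcases q with y | s
  · simp only [levelBlowUp, Sum.elim_inl, SimpleGraph.irrefl, false_or]
    constructor
    · intro h
      obtain ⟨l, hl, hlev⟩ := exists_hasLevel (x := x - y)
        (sub_ne_zero.2 fun hxy => h.ne (by rw [hxy]))
      exact ⟨x, y, rfl, rfl, l, mem_filter.2 ⟨mem_range.2 hl, (hlevel hlev).1 h⟩, hlev⟩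
    · rintro ⟨x', y', hx, hy, l, hl, hlev⟩
      obtain rfl := Sum.inl_injective hx
      obtain rfl := Sum.inl_injective hy
      exact (hlevel hlev).2 (mem_filter.1 hl).2
  · simp [levelBlowUp, hcross]
  · simp [levelBlowUp, G.adj_comm (.inr r), hcross]
  · simp [levelBlowUp]

theorem isEmpty_hom_comap_iff {W : Type*} (H : SimpleGraph V) (G : SimpleGraph W)
    (σ : W ≃ W) : IsEmpty (H →g G.comap σ) ↔ IsEmpty (H →g G) := by
  have key {G : SimpleGraph W} {σ : W ≃ W} (h : IsEmpty (H →g G)) : IsEmpty (H →g G.comap σ) :=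
    ⟨fun f => h.false ⟨fun v => σ (f v), fun {_ _} huv => f.map_adj huv⟩⟩
  refine ⟨fun h => ?_, key⟩
  have := key (σ := σ.symm) h
  rwa [SimpleGraph.comap_comap, Equiv.self_comp_symm, SimpleGraph.comap_id] at this

theorem ncard_isEmpty_hom_congr {W W' : Type*} (H : SimpleGraph V) (e : W ≃ W') :
    {G : SimpleGraph W | IsEmpty (H →g G)}.ncard =
      {G : SimpleGraph W' | IsEmpty (H →g G)}.ncard := by
  refine Set.ncard_congr (fun G _ => G.comap e.symm) (fun G h => ?_) (fun G F _ _ h => ?_)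
    (fun G h => ⟨G.comap e, ?_, ?_⟩)
  · exact ⟨fun f => h.false ⟨fun v => e.symm (f v), fun {_ _} huv => f.map_adj huv⟩⟩
  · have := congrArg (SimpleGraph.comap e) h
    simpa only [SimpleGraph.comap_comap, Equiv.symm_comp_self, SimpleGraph.comap_id] using this
  · exact ⟨fun f => h.false ⟨fun v => e (f v), fun {_ _} huv => f.map_adj huv⟩⟩
  · simp only [SimpleGraph.comap_comap, Equiv.self_comp_symm, SimpleGraph.comap_id]

theorem mapsToBlowUp_of_card_le [Fintype V] (H : SimpleGraph V) (h : Fintype.card V ≤ 2 ^ m)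
    (G : SimpleGraph (Option R)) : MapsToBlowUp H (range m) G := by
  have hcard : Fintype.card V ≤ Fintype.card (Fin m → Bool) := by simpa using h
  obtain ⟨c⟩ := Function.Embedding.nonempty_of_card_le hcard
  refine ⟨fun _ => none, fun v l => if hl : l < m then c v ⟨l, hl⟩ else false,
    fun u v huv => Or.inr ⟨rfl, rfl, ?_⟩⟩
  obtain ⟨l, hl⟩ := Function.ne_iff.1 (c.injective.ne huv.ne)
  exact ⟨l, mem_range.2 l.2, by simpa using hl⟩

/-- Modulo 2, the number of graphs not admitting a homomorphism from `H` does not change when a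
vertex is replaced by `2 ^ 2 ^ t` vertices. -/
theorem ncard_isEmpty_hom_modEq [Fintype V] [Finite R] (H : SimpleGraph V) {t : ℕ}
    (h : Fintype.card V ≤ 2 ^ 2 ^ t) :
    {G : SimpleGraph (ZMod (2 ^ 2 ^ t) ⊕ R) | IsEmpty (H →g G)}.ncard ≡
      {G : SimpleGraph (Option R) | IsEmpty (H →g G)}.ncard [MOD 2] := by
  classical
  set m := 2 ^ t with hm
  have hm0 : 0 < m := by positivity
  have hs := ncard_modEq_ncard_invariant (IsPGroup.of_card (p := 2) (n := m) (by simp))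
    (shiftHom m R) {G | IsEmpty (H →g G)} fun a G hG => (isEmpty_hom_comap_iff H G _).2 hG
  have hu := ncard_modEq_ncard_invariant (IsPGroup.of_card (p := 2) (n := m - 1) (by
      rw [Nat.card_eq_fintype_card, ZMod.card_units_eq_totient,
        Nat.totient_prime_pow Nat.prime_two hm0]; simp))
    (unitsHom m R) {G ∈ {G | IsEmpty (H →g G)} | ∀ a, G.comap (shiftHom m R a) = G}
    fun u G hG => ⟨(isEmpty_hom_comap_iff H G _).2 hG.1, fun a => ?_⟩
  swap
  · rw [SimpleGraph.comap_comap, ← Equiv.Perm.coe_mul]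
    have : unitsHom m R u * shiftHom m R a =
        shiftHom m R (.ofAdd ((u : ZMod (2 ^ m)) * a.toAdd)) * unitsHom m R u := by
      ext (x | x) <;> simp [shiftHom, unitsHom, mul_add]
    rw [this, Equiv.Perm.coe_mul, ← SimpleGraph.comap_comap, hG.2]
  refine (hs.trans hu).trans ?_
  have himage : {G ∈ {G ∈ {G | IsEmpty (H →g G)} | ∀ a, G.comap (shiftHom m R a) = G} |
      ∀ u, G.comap (unitsHom m R u) = G} =
      ⋃ L : {L // L ∈ (range m).powerset},
        levelBlowUp m L.1 (mem_powerset.1 L.2) '' {G | ¬ MapsToBlowUp H L.1 G} := by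
    ext G
    simp only [Set.mem_ofPred_eq, Set.mem_iUnion, Set.mem_image]
    constructor
    · rintro ⟨⟨h1, h2⟩, h3⟩
      obtain ⟨L, hL, F, rfl⟩ := exists_eq_levelBlowUp h2 h3
      exact ⟨⟨L, mem_powerset.2 hL⟩, F, by
        rwa [← nonempty_hom_levelBlowUp_iff H hL, not_nonempty_iff], rfl⟩
    · rintro ⟨L, F, hF, rfl⟩
      refine ⟨⟨?_, fun a => ?_⟩, fun u => ?_⟩
      · rwa [← nonempty_hom_levelBlowUp_iff H (mem_powerset.1 L.2), not_nonempty_iff] at hF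
      · ext (x | x) (y | y) <;> simp [shiftHom, levelBlowUp]
      · have hunit (x y : ZMod (2 ^ m)) (l : ℕ) : HasLevel l ((u : ZMod (2 ^ m)) * x - (u : ZMod (2 ^ m)) * y) ↔
            HasLevel l (x - y) := by
          rw [← mul_sub]
          exact ⟨fun ⟨v, hv⟩ => ⟨u⁻¹ * v, by simp [mul_assoc, ← hv]⟩,
            fun ⟨v, hv⟩ => ⟨u * v, by simp [mul_assoc, ← hv]⟩⟩
        ext (x | x) (y | y) <;> simp [unitsHom, levelBlowUp, hunit]
  have hdisj : Pairwise (Function.onFun Disjoint fun L : {L // L ∈ (range m).powerset} =>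
      levelBlowUp m L.1 (mem_powerset.1 L.2) '' {G : SimpleGraph (Option R) |
        ¬ MapsToBlowUp H L.1 G}) := by
    intro L K hLK
    rw [Function.onFun, Set.disjoint_left]
    rintro _ ⟨G, -, rfl⟩ ⟨F, -, hF⟩
    exact hLK (Subtype.ext (levelBlowUp_injective _ _ hF).1.symm)
  have hcount (L : {L // L ∈ (range m).powerset}) :
      (levelBlowUp m L.1 (mem_powerset.1 L.2) '' {G : SimpleGraph (Option R) |
        ¬ MapsToBlowUp H L.1 G}).ncard =
      {G : SimpleGraph (Option R) | ¬ MapsToBlowUp H (range #L.1) G}.ncard := by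
    rw [Set.ncard_image_of_injective _ fun G F hGF => (levelBlowUp_injective _ _ hGF).2]
    congr 1
    ext G
    exact not_congr ⟨.of_card_eq (by simp), .of_card_eq (by simp)⟩
  have hzero : {G : SimpleGraph (Option R) | ¬ MapsToBlowUp H (range 0) G} =
      {G : SimpleGraph (Option R) | IsEmpty (H →g G)} := by
    ext G
    rw [Set.mem_ofPred_eq, Set.mem_ofPred_eq, ← not_nonempty_iff]
    refine not_congr ⟨?_, ?_⟩
    · rintro ⟨f, c, hfc⟩
      exact ⟨⟨f, fun {u v} huv => by simpa using hfc u v huv⟩⟩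
    · rintro ⟨f⟩
      exact ⟨f, fun _ _ => false, fun u v huv => Or.inl (f.map_adj huv)⟩
  have htop : {G : SimpleGraph (Option R) | ¬ MapsToBlowUp H (range m) G} = ∅ := by
    rw [Set.eq_empty_iff_forall_notMem]
    exact fun G hG => hG (mapsToBlowUp_of_card_le H h G)
  rw [himage, Set.ncard_iUnion_of_finite (fun _ => Set.toFinite _) hdisj]
  simp only [hcount]
  rw [← ZMod.natCast_eq_natCast_iff, finsum_eq_sum_of_fintype]
  rw [sum_coe_sort (range m).powerset (fun L => {G : SimpleGraph (Option R) |
        ¬ MapsToBlowUp H (range #L) G}.ncard),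
    sum_powerset_apply_card (fun i => {G : SimpleGraph (Option R) |
        ¬ MapsToBlowUp H (range i) G}.ncard), card_range, Nat.cast_sum,
    sum_range_succ', sum_eq_zero, hzero]
  · simp
  · intro i hi
    rcases eq_or_ne (i + 1) m with him | him
    · rw [him, htop]
      simp
    · have := Nat.prime_two.dvd_choose_pow (Nat.succ_ne_zero i) (hm ▸ him)
      rw [smul_eq_mul, Nat.cast_mul, (ZMod.natCast_eq_zero_iff _ 2).2 this, zero_mul]

/-- The number of graphs on `k` vertices not admitting a homomorphism from `H` is odd whenever
`k` is in a suitable residue class. -/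
theorem odd_ncard_isEmpty_hom [Fintype V] (H : SimpleGraph V) (hH : H.edgeSet.Nonempty) {t : ℕ}
    (h : Fintype.card V ≤ 2 ^ 2 ^ t) (q : ℕ) (B : Type*) [Fintype B]
    (hB : Fintype.card B = (2 ^ 2 ^ t - 1) * q + 1) :
    Odd {G : SimpleGraph B | IsEmpty (H →g G)}.ncard := by
  suffices hfin : Odd {G : SimpleGraph (Fin ((2 ^ 2 ^ t - 1) * q + 1)) |
      IsEmpty (H →g G)}.ncard by
    rwa [ncard_isEmpty_hom_congr H (Fintype.equivFinOfCardEq hB)]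
  clear hB
  induction q with
  | zero =>
    have : {G : SimpleGraph (Fin ((2 ^ 2 ^ t - 1) * 0 + 1)) | IsEmpty (H →g G)} = Set.univ := by
      rw [Set.eq_univ_iff_forall]
      refine fun G => ⟨fun f => ?_⟩
      obtain ⟨e, he⟩ := hH
      induction e with
      | h u v => exact (f.map_adj he).ne (Subsingleton.elim (α := Fin 1) _ _)
    rw [this, Set.ncard_univ, Nat.card_eq_fintype_card]
    have : Unique (SimpleGraph (Fin ((2 ^ 2 ^ t - 1) * 0 + 1))) :=
      { default := ⊥
        uniq := fun G => by
          ext a b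
          obtain rfl : a = b := Subsingleton.elim (α := Fin 1) _ _
          simp }
    simp
  | succ q ih =>
    have hpos : 0 < 2 ^ 2 ^ t := by positivity
    have key := ncard_isEmpty_hom_modEq (R := Fin ((2 ^ 2 ^ t - 1) * q)) H h
    rw [ncard_isEmpty_hom_congr H (Fintype.equivFinOfCardEq (α := Option _)
      (n := (2 ^ 2 ^ t - 1) * q + 1) (by simp)),
      ncard_isEmpty_hom_congr H (Fintype.equivFinOfCardEq
        (n := (2 ^ 2 ^ t - 1) * (q + 1) + 1) (by
          rw [Fintype.card_sum, ZMod.card, Fintype.card_fin, mul_add]; omega))] at key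
    rw [Nat.odd_iff] at ih ⊢
    exact Eq.trans key ih

end Parity

section DifferenceClique

open Finset

variable {F : Type*} [Field F] [Fintype F] [DecidableEq F]

/-- A point-line incidence bound: the number of pairs in `A` with difference in the multiplicative
subgroup `U` is close to its expected value. -/
theorem sq_card_differences_le {U : Finset F} (h0 : 0 ∉ U)
    (hU : ∀ w ∈ U, ∀ z, w * z ∈ U ↔ z ∈ U) (hUne : U.Nonempty) (A : Finset F) :
    ((#A : ℝ) ^ 2 * #U / Fintype.card F - ∑ b ∈ A, (#{a ∈ A | a - b ∈ U} : ℝ)) ^ 2 ≤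
      (#A : ℝ) ^ 2 * Fintype.card F := by
  set r : ℝ := (Fintype.card F : ℝ) with hr
  have hr0 : 0 < r := by
    rw [hr]
    exact_mod_cast Fintype.card_pos
  have hU0 : (0 : ℝ) < #U := by exact_mod_cast card_pos.2 hUne
  let χ (z : F) : ℝ := if z ∈ U then 1 else 0
  have hχsum : ∑ z, χ z = #U := by simp [χ]
  have hχsq (z : F) : χ z * χ z = χ z := by simp [χ]
  let f (w y : F) : ℝ := ∑ a ∈ A, χ (a * w - y)
  have hshift (c : F) (g : F → ℝ) : ∑ y, g (c - y) = ∑ y, g y :=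
    (Equiv.subLeft c).sum_comp g
  have hf1 : ∑ w, ∑ y, f w y = r * (#A * #U) := by
    simp only [f]
    simp_rw [sum_comm (s := univ) (t := A), hshift _ χ, hχsum]
    simp only [sum_const, card_univ, nsmul_eq_mul, ← hr]
    ring
  have hf2 : ∑ w, ∑ y, f w y ^ 2 ≤ r * (#A * #U) + (#A * #U) ^ 2 := by
    have hpair (a a' : F) : ∑ w, ∑ y, χ (a * w - y) * χ (a' * w - y) ≤
        (if a = a' then r * #U else 0) + (#U : ℝ) ^ 2 := by
      have h1 (w : F) : ∑ y, χ (a * w - y) * χ (a' * w - y) =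
          ∑ y, χ y * χ ((a' - a) * w + y) := by
        rw [← hshift (a * w)]
        refine sum_congr rfl fun y _ => ?_
        congr 2 <;> ring
      simp_rw [h1]
      split_ifs with h
      · subst h
        simp only [sub_self, zero_mul, zero_add, hχsq, hχsum, sum_const, card_univ, nsmul_eq_mul]
        rw [← hr]
        exact le_add_of_nonneg_right (sq_nonneg _)
      · rw [sum_comm]
        have h2 (y : F) : ∑ w, χ ((a' - a) * w + y) = #U := by
          have ha : a' - a ≠ 0 := sub_ne_zero.2 (Ne.symm h)
          rw [← hχsum]
          exact ((Equiv.mulLeft₀ _ ha).trans (Equiv.addRight y)).sum_comp χ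
        simp_rw [← mul_sum, h2, ← sum_mul, hχsum]
        rw [zero_add, sq]
    calc ∑ w, ∑ y, f w y ^ 2
        = ∑ a ∈ A, ∑ a' ∈ A, ∑ w, ∑ y, χ (a * w - y) * χ (a' * w - y) := by
          simp only [f, sq, sum_mul_sum]
          simp_rw [sum_comm (s := univ) (t := A)]
      _ ≤ ∑ a ∈ A, ∑ a' ∈ A, ((if a = a' then r * #U else 0) + (#U : ℝ) ^ 2) :=
          sum_le_sum fun a _ => sum_le_sum fun a' _ => hpair a a'
      _ = r * (#A * #U) + (#A * #U) ^ 2 := by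
          simp only [sum_add_distrib, sum_ite_eq, sum_const, nsmul_eq_mul, sum_ite_mem, inter_self]
          ring
  set M : ℝ := #A * #U with hM
  have hvar : ∑ w, ∑ y, (f w y - M / r) ^ 2 ≤ M * r := by
    have : ∑ w, ∑ y, (f w y - M / r) ^ 2 =
        ∑ w, ∑ y, f w y ^ 2 - 2 * (M / r) * ∑ w, ∑ y, f w y + r * r * (M / r) ^ 2 := by
      simp only [sub_sq, sum_add_distrib, sum_sub_distrib, sum_const, card_univ, nsmul_eq_mul,
        ← hr, mul_sum]
      congr 1
      · congr 1
        exact sum_congr rfl fun w _ => sum_congr rfl fun y _ => by ring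
      · ring
    rw [this, hf1]
    have h1 : 2 * (M / r) * (r * M) = 2 * M ^ 2 := by field_simp
    have h2 : r * r * (M / r) ^ 2 = M ^ 2 := by field_simp
    rw [h1, h2]
    linarith
  have hsub : ∑ p ∈ U ×ˢ A, (f p.1 (p.1 * p.2) - M / r) ^ 2 ≤ M * r := by
    refine le_trans ?_ hvar
    rw [← Fintype.sum_prod_type' (f := fun w y => (f w y - M / r) ^ 2)]
    have hinj : Set.InjOn (fun p : F × F => (p.1, p.1 * p.2)) (U ×ˢ A : Finset (F × F)) := by
      rintro ⟨w, b⟩ hwb ⟨w', b'⟩ _ h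
      simp only [Prod.mk.injEq] at h
      obtain ⟨rfl, h⟩ := h
      have hw : w ≠ 0 := fun hw => h0 (hw ▸ (mem_product.1 (mem_coe.1 hwb)).1)
      rw [mul_left_cancel₀ hw h]
    rw [← sum_image (f := fun p : F × F => (f p.1 p.2 - M / r) ^ 2) hinj]
    exact sum_le_sum_of_subset_of_nonneg (subset_univ _) fun _ _ _ => sq_nonneg _
  have hinc : ∑ p ∈ U ×ˢ A, (f p.1 (p.1 * p.2) - M / r) =
      #U * (∑ b ∈ A, (#{a ∈ A | a - b ∈ U} : ℝ) - (#A : ℝ) ^ 2 * #U / r) := by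
    have h1 (w : F) (hw : w ∈ U) (b : F) : f w (w * b) = #{a ∈ A | a - b ∈ U} := by
      simp only [f, χ, show ∀ a, a * w - w * b = w * (a - b) from fun a => by ring, hU w hw]
      simp
    rw [sum_product]
    have h2 (w : F) (hw : w ∈ U) : ∑ b ∈ A, (f w (w * b) - M / r) =
        ∑ b ∈ A, (#{a ∈ A | a - b ∈ U} : ℝ) - (#A : ℝ) ^ 2 * #U / r := by
      rw [sum_sub_distrib, sum_congr rfl fun b _ => h1 w hw b]
      simp only [sum_const, nsmul_eq_mul, hM]
      ring
    rw [sum_congr rfl h2, sum_const, nsmul_eq_mul]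
  have hcs := sq_sum_le_card_mul_sum_sq (s := U ×ˢ A)
    (f := fun p => f p.1 (p.1 * p.2) - M / r)
  rw [hinc, card_product, mul_pow] at hcs
  push_cast at hcs
  have hfin : (#U : ℝ) ^ 2 * (∑ b ∈ A, (#{a ∈ A | a - b ∈ U} : ℝ) - (#A : ℝ) ^ 2 * #U / r) ^ 2 ≤
      (#U : ℝ) ^ 2 * ((#A : ℝ) ^ 2 * r) := by
    refine hcs.trans ((mul_le_mul_of_nonneg_left hsub (by positivity)).trans (le_of_eq ?_))
    rw [hM]
    ring
  rw [sub_sq_comm]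
  exact le_of_mul_le_mul_left hfin (by positivity)

theorem exists_card_le_differences {U : Finset F} (h0 : 0 ∉ U)
    (hU : ∀ w ∈ U, ∀ z, w * z ∈ U ↔ z ∈ U) (hUne : U.Nonempty) {A : Finset F}
    (hA : √(Fintype.card F) ≤ #A * (#U / (2 * Fintype.card F))) :
    ∃ b ∈ A, (#A : ℝ) * (#U / (2 * Fintype.card F)) ≤ #{a ∈ A | a - b ∈ U} := by
  have key := sq_card_differences_le h0 hU hUne A
  set r : ℝ := (Fintype.card F : ℝ) with hr
  have hr0 : 0 < r := by
    rw [hr]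
    exact_mod_cast Fintype.card_pos
  have hAne : A.Nonempty := by
    rw [nonempty_iff_ne_empty]
    rintro rfl
    have := Real.sqrt_pos.2 hr0
    simp only [card_empty, Nat.cast_zero, zero_mul] at hA
    linarith
  by_contra! hlt
  have hsum : ∑ b ∈ A, (#{a ∈ A | a - b ∈ U} : ℝ) < ∑ _b ∈ A, (#A : ℝ) * (#U / (2 * r)) :=
    sum_lt_sum_of_nonempty hAne hlt
  rw [sum_const, nsmul_eq_mul] at hsum
  have hA0 : (0 : ℝ) < #A := by exact_mod_cast card_pos.2 hAne
  have hD := Real.abs_le_sqrt key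
  rw [Real.sqrt_mul (by positivity), Real.sqrt_sq hA0.le] at hD
  have h1 := (le_abs_self _).trans hD
  have h2 : (#A : ℝ) ^ 2 * #U / r = 2 * (#A * (#A * (#U / (2 * r)))) := by field_simp
  have h3 := mul_le_mul_of_nonneg_left hA hA0.le
  rw [h2] at h1
  linarith

/-- Dense multiplicative subgroups of a finite field contain all differences of long sequences. -/
theorem exists_differences_mem {U : Finset F} (h0 : 0 ∉ U)
    (hU : ∀ w ∈ U, ∀ z, w * z ∈ U ↔ z ∈ U) (hUne : U.Nonempty) (h : ℕ) (A : Finset F)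
    (hA : √(Fintype.card F) ≤ #A * (#U / (2 * Fintype.card F) : ℝ) ^ h) :
    ∃ x : Fin h → F, (∀ i, x i ∈ A) ∧ ∀ i j, i < j → x j - x i ∈ U := by
  induction h generalizing A with
  | zero => exact ⟨Fin.elim0, fun i => i.elim0, fun i => i.elim0⟩
  | succ h ih =>
    have hr0 : (0 : ℝ) < Fintype.card F := by exact_mod_cast Fintype.card_pos
    have hδ0 : (0 : ℝ) ≤ #U / (2 * Fintype.card F) := by positivity
    have hδ1 : (#U / (2 * Fintype.card F) : ℝ) ≤ 1 := by
      rw [div_le_one (by positivity)]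
      have : (#U : ℝ) ≤ Fintype.card F := by exact_mod_cast card_le_univ U
      linarith
    obtain ⟨b, hb, hcard⟩ := exists_card_le_differences h0 hU hUne (A := A) (hA.trans
      (mul_le_mul_of_nonneg_left (pow_le_of_le_one hδ0 hδ1 (Nat.succ_ne_zero h)) (by positivity)))
    obtain ⟨x, hx, hxU⟩ := ih {a ∈ A | a - b ∈ U} (by
      refine hA.trans ?_
      rw [pow_succ', ← mul_assoc]
      exact mul_le_mul_of_nonneg_right hcard (pow_nonneg hδ0 h))
    refine ⟨Fin.cons b x, fun i => ?_, fun i j hij => ?_⟩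
    · refine Fin.cases hb (fun i => ?_) i
      exact (mem_filter.1 (hx i)).1
    · induction j using Fin.cases with
      | zero => exact absurd hij (Fin.not_lt_zero i)
      | succ j =>
        induction i using Fin.cases with
        | zero => exact (mem_filter.1 (hx j)).2
        | succ i => exact hxU i j (Fin.succ_lt_succ_iff.1 hij)

/-- The properties of a prime used to build a large block of vertices: a 2-group of units whose
translates contain all differences of a sequence of length `h`. -/
def IsBlockPrime (h a p : ℕ) : Prop :=
  p.Prime ∧ p ≡ 1 [MOD 2 ^ a] ∧ h ≤ p ∧ ∃ U : Subgroup (ZMod p)ˣ, IsPGroup 2 U ∧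
    ∃ x : Fin h → ZMod p, ∀ i j, i < j → ∃ u ∈ U, x j - x i = (u : ZMod p)

theorem NearFermatPrime.isBlockPrime {h a p : ℕ} (hh : 0 < h)
    (hp : NearFermatPrime (1 / (4 * h)) p) (hph : 4 ^ (4 * h) ≤ p) (hpa : 4 ^ (a + 1) ≤ p) :
    IsBlockPrime h a p := by
  obtain ⟨hp', s, hs, hle⟩ := hp
  have : Fact p.Prime := ⟨hp'⟩
  have : Fact (Nat.Prime 2) := ⟨Nat.prime_two⟩
  have hcard : Nat.card (ZMod p)ˣ = p - 1 := by
    rw [Nat.card_eq_fintype_card, ZMod.card_units]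
  obtain ⟨U, hUcard⟩ := Sylow.exists_subgroup_card_pow_prime 2 (hcard ▸ hs)
  have hp0 : (0 : ℝ) < p := by exact_mod_cast hp'.pos
  have hp2 : (2 : ℝ) ≤ p := by exact_mod_cast hp'.two_le
  have hp1 : (1 : ℝ) ≤ p := by linarith
  have hh' : (0 : ℝ) < h := by exact_mod_cast hh
  have hmul : ((p : ℝ) - 1) ≤ (p : ℝ) ^ (1 / (4 * h) : ℝ) * 2 ^ s := by
    have h1 : ((p - 1 : ℕ) : ℝ) = (((p - 1) / 2 ^ s : ℕ) : ℝ) * 2 ^ s := by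
      exact_mod_cast (Nat.div_mul_cancel hs).symm
    rw [Nat.cast_sub hp'.one_le, Nat.cast_one] at h1
    rw [h1]
    gcongr
  set ρ : ℝ := (p : ℝ) ^ (1 / (4 * h) : ℝ) with hρ
  have hρ0 : 0 < ρ := Real.rpow_pos_of_pos hp0 _
  have hρpow : ρ ^ (4 * h) = p := by
    rw [hρ, ← Real.rpow_natCast, ← Real.rpow_mul hp0.le]
    push_cast
    rw [one_div, inv_mul_cancel₀ (by positivity), Real.rpow_one]
  have hρ4 : 4 ≤ ρ := by
    refine le_of_pow_le_pow_left₀ (n := 4 * h) (by omega) hρ0.le ?_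
    rw [hρpow]
    exact_mod_cast hph
  have hδ : 1 / (4 * ρ) ≤ (2 ^ s / (2 * p) : ℝ) := by
    rw [div_le_div_iff₀ (by positivity) (by positivity)]
    nlinarith
  refine ⟨hp', ?_, ?_, U, IsPGroup.of_card hUcard, ?_⟩
  · have hρle : ρ ^ 2 ≤ p := by
      rw [← hρpow]
      exact pow_le_pow_right₀ (by linarith) (by omega)
    have hsa : a ≤ s := by
      by_contra! hlt
      have h2 : (2 : ℝ) ^ s * 2 ≤ 2 ^ a := by
        rw [← pow_succ]
        exact pow_le_pow_right₀ one_le_two hlt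
      have h3 : (4 : ℝ) * (2 ^ a) ^ 2 ≤ p := by
        rw [← pow_mul, mul_comm a 2, pow_mul]
        norm_num
        rw [← pow_succ']
        exact_mod_cast hpa
      have h4 : (p : ℝ) ≤ ρ * 2 ^ a := by nlinarith
      have h5 : (p : ℝ) ^ 2 ≤ ρ ^ 2 * (2 ^ a) ^ 2 := by
        rw [← mul_pow]
        exact pow_le_pow_left₀ hp0.le h4 2
      nlinarith [mul_le_mul_of_nonneg_right hρle (sq_nonneg ((2 : ℝ) ^ a))]
    exact ((Nat.modEq_iff_dvd' hp'.one_le).2 ((pow_dvd_pow 2 hsa).trans hs)).symm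
  · calc h ≤ 4 ^ h := (Nat.lt_pow_self (by norm_num)).le
      _ ≤ 4 ^ (4 * h) := Nat.pow_le_pow_right (by norm_num) (by omega)
      _ ≤ p := hph
  · classical
    let U' : Finset (ZMod p) := {z | ∃ u ∈ U, (u : ZMod p) = z}
    have hmem {z : ZMod p} : z ∈ U' ↔ ∃ u ∈ U, (u : ZMod p) = z := by simp [U']
    have hU'card : #U' = 2 ^ s := by
      rw [← hUcard, ← Set.ncard_coe_finset, ← Nat.card_coe_set_eq]
      refine (Nat.card_congr (Equiv.ofBijective
        (fun u : U => ⟨((u : (ZMod p)ˣ) : ZMod p), hmem.2 ⟨u, u.2, rfl⟩⟩) ⟨?_, ?_⟩)).symm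
      · intro u v huv
        exact Subtype.ext (Units.ext (congrArg Subtype.val huv))
      · rintro ⟨z, hz⟩
        obtain ⟨u, hu, rfl⟩ := hmem.1 hz
        exact ⟨⟨u, hu⟩, rfl⟩
    obtain ⟨x, -, hx⟩ := exists_differences_mem (U := U') (fun h => by
        obtain ⟨u, -, hu⟩ := hmem.1 h
        exact u.ne_zero hu) (fun w hw z => by
        obtain ⟨w, hwU, rfl⟩ := hmem.1 hw
        constructor
        · intro h
          obtain ⟨u, hu, huz⟩ := hmem.1 h
          exact hmem.2 ⟨w⁻¹ * u, U.mul_mem (U.inv_mem hwU) hu, by rw [Units.val_mul, huz, Units.inv_mul_cancel_left]⟩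
        · intro h
          obtain ⟨u, hu, rfl⟩ := hmem.1 h
          exact hmem.2 ⟨w * u, U.mul_mem hwU hu, by simp⟩)
      ⟨1, hmem.2 ⟨1, U.one_mem, by simp⟩⟩ h univ (by
        rw [hU'card, card_univ, ZMod.card]
        push_cast
        calc √(p : ℝ) = ρ ^ (2 * h) := by
              rw [← hρpow, show 4 * h = 2 * h * 2 by ring, pow_mul,
                Real.sqrt_sq (by positivity)]
          _ = ρ ^ (4 * h) / (ρ * ρ) ^ h := by
              rw [eq_div_iff (by positivity)]
              ring
          _ ≤ ρ ^ (4 * h) / (4 * ρ) ^ h := by gcongr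
          _ = p * (1 / (4 * ρ)) ^ h := by rw [hρpow, one_div, inv_pow, div_eq_mul_inv]
          _ ≤ p * (2 ^ s / (2 * p)) ^ h := by gcongr)
    refine ⟨x, fun i j hij => ?_⟩
    obtain ⟨u, hu, h⟩ := hmem.1 (hx i j hij)
    exact ⟨u, hu, h.symm⟩

end DifferenceClique

/-- Relabel the queries of a decision tree. -/
def DecisionTree.map {ι κ : Type} (f : ι → κ) : DecisionTree ι → DecisionTree κ
  | leaf b => leaf b
  | node i t s => node (f i) (t.map f) (s.map f)

theorem DecisionTree.eval_map {ι κ : Type} (f : ι → κ) (T : DecisionTree ι) (x : κ → Bool) :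
    (T.map f).eval x = T.eval (x ∘ f) := by
  induction T with
  | leaf b => rfl
  | node i t s iht ihs =>
    simp only [map, eval, iht, ihs, Function.comp_apply]

theorem DecisionTree.depth_map {ι κ : Type} (f : ι → κ) (T : DecisionTree ι) :
    (T.map f).depth = T.depth := by
  induction T with
  | leaf b => rfl
  | node i t s iht ihs => simp only [map, depth, iht, ihs]

/-- Every Boolean function has a decision tree querying each variable at most once. -/
theorem DecisionTree.exists_depth_le {ι : Type} [Fintype ι] (f : (ι → Bool) → Prop) :
    ∃ T : DecisionTree ι, (∀ x, T.eval x = true ↔ f x) ∧ T.depth ≤ Fintype.card ι := by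
  classical
  suffices h : ∀ (Y : Finset ι) (z : ι → Bool), ∃ T : DecisionTree ι,
      (∀ x, (∀ i ∉ Y, x i = z i) → (T.eval x = true ↔ f x)) ∧ T.depth ≤ Y.card by
    obtain ⟨T, hT, hd⟩ := h Finset.univ fun _ => false
    exact ⟨T, fun x => hT x fun i hi => absurd (Finset.mem_univ i) hi, hd⟩
  intro Y
  induction Y using Finset.induction_on with
  | empty =>
    intro z
    refine ⟨leaf (decide (f z)), fun x hx => ?_, le_rfl⟩
    have : x = z := funext fun i => hx i (Finset.notMem_empty i)
    simp [eval, this]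
  | insert i Y hi ih =>
    intro z
    obtain ⟨T, hT, hTd⟩ := ih (Function.update z i true)
    obtain ⟨S, hS, hSd⟩ := ih (Function.update z i false)
    refine ⟨node i T S, fun x hx => ?_, ?_⟩
    · have hx' (j : ι) (hj : j ∉ Y) : x j = Function.update z i (x i) j := by
        by_cases hji : j = i
        · subst hji
          simp
        · rw [Function.update_of_ne hji]
          exact hx j (by simp [hji, hj])
      rcases hxi : x i with _ | _
      · rw [hxi] at hx'
        simpa [eval, hxi] using hS x hx'
      · rw [hxi] at hx'
        simpa [eval, hxi] using hT x hx'
    · rw [Finset.card_insert_of_notMem hi]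
      simp only [depth]
      omega

section EdgeSets

variable {W : Type}

/-- The graph with a given finite set of edges. -/
def graphOfEdges (A : Finset {e : Sym2 W // ¬ e.IsDiag}) : SimpleGraph W where
  Adj u v := ∃ h : ¬ (s(u, v)).IsDiag, ⟨s(u, v), h⟩ ∈ A
  symm := ⟨fun u v ⟨h, hA⟩ => by
    have := Sym2.eq_swap (a := u) (b := v)
    exact ⟨by rwa [← this], by simpa only [this] using hA⟩⟩
  loopless := ⟨fun u ⟨h, _⟩ => h rfl⟩

theorem graphOfEdges_bijective [Finite W] : Function.Bijective (graphOfEdges (W := W)) := by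
  classical
  have := Fintype.ofFinite W
  constructor
  · intro A B h
    ext ⟨e, he⟩
    induction e with
    | h u v =>
      have := congrArg (fun G => G.Adj u v) h
      rw [eq_iff_iff] at this
      exact ⟨fun hA => (this.1 ⟨he, hA⟩).2, fun hB => (this.2 ⟨he, hB⟩).2⟩
  · intro G
    refine ⟨Finset.univ.filter fun e => e.1 ∈ G.edgeSet, ?_⟩
    ext u v
    simp only [graphOfEdges, Finset.mem_filter, Finset.mem_univ, true_and,
      SimpleGraph.mem_edgeSet]
    exact ⟨fun ⟨_, h⟩ => h, fun h => ⟨h.ne, h⟩⟩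

theorem graphOfEdges_mono {A B : Finset {e : Sym2 W // ¬ e.IsDiag}} (h : A ⊆ B) :
    graphOfEdges A ≤ graphOfEdges B :=
  fun _ _ ⟨hd, hA⟩ => ⟨hd, h hA⟩

/-- The permutation of the edges induced by a permutation of the vertices. -/
def edgePerm (σ : Equiv.Perm W) : Equiv.Perm {e : Sym2 W // ¬ e.IsDiag} :=
  (⟨Sym2.map σ, Sym2.map σ.symm, fun e => by simp [Sym2.map_map], fun e => by
    simp [Sym2.map_map]⟩ : Equiv.Perm (Sym2 W)).subtypeEquiv fun e => by
    induction e with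
    | h u v => simp

theorem edgePerm_congr {σ τ σ' τ' : Equiv.Perm W} (h : ∀ w, σ (τ w) = σ' (τ' w))
    (e : {e : Sym2 W // ¬ e.IsDiag}) :
    edgePerm σ (edgePerm τ e) = edgePerm σ' (edgePerm τ' e) := by
  obtain ⟨e, he⟩ := e
  induction e with
  | h u v => exact Subtype.ext (by simp [edgePerm, h])

theorem comap_graphOfEdges_map (σ : Equiv.Perm W) (A : Finset {e : Sym2 W // ¬ e.IsDiag}) :
    (graphOfEdges (A.map (edgePerm σ).toEmbedding)).comap σ = graphOfEdges A := by
  ext u v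
  have key (h : ¬ (s(u, v)).IsDiag) (h' : ¬ (s(σ u, σ v)).IsDiag) :
      (⟨s(σ u, σ v), h'⟩ : {e : Sym2 W // ¬ e.IsDiag}) = (edgePerm σ).toEmbedding ⟨s(u, v), h⟩ :=
    Subtype.ext (by simp [edgePerm])
  constructor
  · rintro ⟨h', hA⟩
    have h : ¬ (s(u, v)).IsDiag := by simpa using h'
    exact ⟨h, by rwa [key h h', Finset.mem_map'] at hA⟩
  · rintro ⟨h, hA⟩
    have h' : ¬ (s(σ u, σ v)).IsDiag := by simpa using h
    exact ⟨h', by rwa [key h h', Finset.mem_map']⟩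

theorem map_edgePerm_eq_iff [Finite W] (σ : Equiv.Perm W) (A : Finset {e : Sym2 W // ¬ e.IsDiag}) :
    A.map (edgePerm σ).toEmbedding = A ↔ (graphOfEdges A).comap σ = graphOfEdges A := by
  constructor
  · intro h
    conv_lhs => rw [← h]
    exact comap_graphOfEdges_map σ A
  · intro h
    apply graphOfEdges_bijective.1
    have := congrArg (SimpleGraph.comap σ.symm) ((comap_graphOfEdges_map σ A).trans h.symm)
    simpa only [SimpleGraph.comap_comap, Equiv.self_comp_symm, SimpleGraph.comap_id] using this

theorem containsCopy_comap_iff {V W W' : Type} (H : SimpleGraph V) (G : SimpleGraph W')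
    (σ : W ≃ W') : ContainsCopy H (G.comap σ) ↔ ContainsCopy H G := by
  constructor
  · rintro ⟨f, hf, h⟩
    exact ⟨fun v => σ (f v), σ.injective.comp hf, fun u v huv => h u v huv⟩
  · rintro ⟨f, hf, h⟩
    exact ⟨fun v => σ.symm (f v), σ.symm.injective.comp hf, fun u v huv => by
      simpa using h u v huv⟩

/-- If `H`-freeness is decided with too few queries, then the number of invariant `H`-free
graphs is even. -/
theorem even_ncard_invariant_graphs [Fintype W] {V : Type} (H : SimpleGraph V) {n : ℕ}
    (hn : Fintype.card W = n) (T : DecisionTree (EdgeVar n))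
    (hT : ∀ x, T.eval x = true ↔ graphOfInput x ∈ ForbiddenSubgraphProperty H n)
    (hd : T.depth < n * (n - 1) / 2) (S : Finset (Equiv.Perm W))
    (hS : ∀ σ ∈ S, ∀ w, σ (σ w) = w) (hcomm : ∀ σ ∈ S, ∀ τ ∈ S, ∀ w, σ (τ w) = τ (σ w))
    (g : Equiv.Perm W) (hgS : ∀ σ ∈ S, ∃ τ ∈ S, ∀ w, τ (g w) = g (σ w))
    (hgS' : ∀ σ ∈ S, ∃ τ ∈ S, ∀ w, g (τ w) = σ (g w)) :
    Even {G : SimpleGraph W | ¬ ContainsCopy H G ∧ (∀ σ ∈ S, G.comap σ = G) ∧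
      G.comap g = G}.ncard := by
  classical
  let e : Fin n ≃ W := (Fintype.equivFinOfCardEq hn).symm
  let φ (p : EdgeVar n) : {e : Sym2 W // ¬ e.IsDiag} := ⟨s(e p.1.1, e p.1.2), by
    simpa using p.2.ne⟩
  have hgraph (A : Finset {e : Sym2 W // ¬ e.IsDiag}) :
      graphOfInput (fun p => decide (φ p ∈ A)) = (graphOfEdges A).comap e := by
    ext i j
    simp only [graphOfInput, SimpleGraph.fromRel_adj, decide_eq_true_eq, SimpleGraph.comap_adj]
    constructor
    · rintro ⟨hij, ⟨h, hA⟩ | ⟨h, hA⟩⟩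
      · exact ⟨_, hA⟩
      · exact SimpleGraph.Adj.symm (G := graphOfEdges A) ⟨_, hA⟩
    · intro h
      have hij : i ≠ j := fun hij => h.ne (congrArg e hij)
      refine ⟨hij, ?_⟩
      rcases lt_or_gt_of_ne hij with hlt | hlt
      · exact Or.inl ⟨hlt, h.2⟩
      · exact Or.inr ⟨hlt, h.symm.2⟩
  have hΔmap (σ : Equiv.Perm W) (A : Finset {e : Sym2 W // ¬ e.IsDiag}) :
      A ∈ {A | ¬ ContainsCopy H (graphOfEdges A)} ↔
      A.map (edgePerm σ).toEmbedding ∈ {A | ¬ ContainsCopy H (graphOfEdges A)} := by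
    rw [Set.mem_ofPred_eq, Set.mem_ofPred_eq, ← containsCopy_comap_iff H _ σ (W' := W),
      ← containsCopy_comap_iff H (graphOfEdges (A.map (edgePerm σ).toEmbedding)) σ,
      comap_graphOfEdges_map, containsCopy_comap_iff]
  have hmem {σ : Equiv.Perm {e : Sym2 W // ¬ e.IsDiag}} : σ ∈ S.image edgePerm ↔
      ∃ τ ∈ S, edgePerm τ = σ := Finset.mem_image
  have key := ModTwoChain.even_ncard_invariant
    (Δ := {A | ¬ ContainsCopy H (graphOfEdges A)})
    (fun A B hBA hA ⟨f, hf, h⟩ => hA ⟨f, hf, fun u v huv => graphOfEdges_mono hBA (h u v huv)⟩)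
    (T.map φ) (fun A => by
      rw [DecisionTree.eval_map, hT]
      change graphOfInput (fun p => decide (φ p ∈ A)) ∈ _ ↔ _
      rw [hgraph]
      exact not_congr (containsCopy_comap_iff H _ e))
    (by
      rw [DecisionTree.depth_map, Sym2.card_subtype_not_diag, hn, Nat.choose_two_right]
      exact hd)
    (S.image edgePerm)
    (by
      intro σ hσ e
      obtain ⟨σ, hσS, rfl⟩ := hmem.1 hσ
      have h1 := edgePerm_congr (σ := σ) (τ := σ) (σ' := 1) (τ' := 1) (hS σ hσS) e
      rw [h1]
      obtain ⟨e, he⟩ := e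
      induction e with
      | h u v => exact Subtype.ext (by simp [edgePerm]))
    (by
      intro σ hσ τ hτ e
      obtain ⟨σ, hσS, rfl⟩ := hmem.1 hσ
      obtain ⟨τ, hτS, rfl⟩ := hmem.1 hτ
      exact edgePerm_congr (hcomm σ hσS τ hτS) e)
    (by
      intro σ hσ A
      obtain ⟨σ, hσS, rfl⟩ := hmem.1 hσ
      exact (hΔmap σ A).1)
    (edgePerm g) (hΔmap g)
    (by
      intro σ hσ
      obtain ⟨σ, hσS, rfl⟩ := hmem.1 hσ
      obtain ⟨τ, hτ, h⟩ := hgS σ hσS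
      exact ⟨_, hmem.2 ⟨τ, hτ, rfl⟩, edgePerm_congr h⟩)
    (by
      intro σ hσ
      obtain ⟨σ, hσS, rfl⟩ := hmem.1 hσ
      obtain ⟨τ, hτ, h⟩ := hgS' σ hσS
      exact ⟨_, hmem.2 ⟨τ, hτ, rfl⟩, edgePerm_congr h⟩)
  rw [← Set.ncard_image_of_injective _ graphOfEdges_bijective.1] at key
  convert key using 2
  ext G
  obtain ⟨A, rfl⟩ := graphOfEdges_bijective.2 G
  rw [graphOfEdges_bijective.1.mem_set_image]
  simp only [Set.mem_ofPred_eq, Finset.mem_image, forall_exists_index, and_imp,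
    forall_apply_eq_imp_iff₂, map_edgePerm_eq_iff]

end EdgeSets

section Blocks

variable {B : Type} {F : B → Type} [∀ b, Field (F b)]

/-- The permutation of a disjoint union of fields acting on each block by an affine map. -/
def blockAffine (m : ∀ b, (F b)ˣ) (c : ∀ b, F b) : Equiv.Perm (Σ b, F b) :=
  Equiv.sigmaCongrRight fun b => (Units.mulLeft (m b)).trans (Equiv.addRight (c b))

theorem blockAffine_mk (m : ∀ b, (F b)ˣ) (c : ∀ b, F b) (b : B) (x : F b) :
    blockAffine m c ⟨b, x⟩ = ⟨b, m b * x + c b⟩ := rfl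

theorem blockAffine_blockAffine (m m' : ∀ b, (F b)ˣ) (c c' : ∀ b, F b) (w : Σ b, F b) :
    blockAffine m c (blockAffine m' c' w) =
      blockAffine (m * m') (fun b => m b * c' b + c b) w := by
  obtain ⟨b, x⟩ := w
  simp only [blockAffine_mk, Pi.mul_apply, Units.val_mul]
  congr 1
  ring

theorem blockAffine_pow_apply {m : ∀ b, (F b)ˣ} {c : ∀ b, F b} (h : ∀ b, m b * c b = c b)
    (k : ℕ) (w : Σ b, F b) :
    (blockAffine m c ^ k) w = blockAffine (m ^ k) (fun b => k * c b) w := by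
  induction k with
  | zero =>
    obtain ⟨b, x⟩ := w
    simp [blockAffine_mk]
  | succ k ih =>
    rw [pow_succ', Equiv.Perm.mul_apply, ih, blockAffine_blockAffine]
    obtain ⟨b, x⟩ := w
    simp only [blockAffine_mk, Pi.mul_apply, pow_succ', Sigma.mk.injEq, heq_eq_eq, true_and,
      add_right_inj]
    rw [mul_left_comm, h]
    push_cast
    ring

theorem comap_pow_eq {W : Type} {G : SimpleGraph W} {g : Equiv.Perm W} (hg : G.comap g = G)
    (k : ℕ) : G.comap (g ^ k : Equiv.Perm W) = G := by
  induction k with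
  | zero => exact SimpleGraph.comap_id
  | succ k ih =>
    rw [pow_succ, Equiv.Perm.coe_mul, ← SimpleGraph.comap_comap, ih, hg]

theorem natCast_eq_of_modEq_card {R : Type} [Field R] [Fintype R] {k l : ℕ}
    (h : k ≡ l [MOD Fintype.card R]) : (k : R) = l := by
  obtain ⟨d, hd⟩ := (Nat.modEq_iff_dvd.1 h)
  have := congrArg (Int.cast (R := R)) hd
  push_cast at this
  rw [Nat.cast_card_eq_zero, zero_mul, sub_eq_zero] at this
  exact this.symm

/-- A graph is block invariant if it is invariant under all blockwise affine maps which are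
translations on the blocks outside `K`. -/
def BlockInvariant (K : Set B) (G : SimpleGraph (Σ b, F b)) : Prop :=
  ∀ (m : ∀ b, (F b)ˣ) (c : ∀ b, F b), (∀ b ∉ K, m b = 1) → G.comap (blockAffine m c) = G

theorem BlockInvariant.comap {K : Set B} {G : SimpleGraph (Σ b, F b)} (hG : BlockInvariant K G)
    (u : ∀ b, (F b)ˣ) : BlockInvariant K (G.comap (blockAffine u 0)) := by
  intro m c hm
  rw [SimpleGraph.comap_comap]
  conv_rhs => rw [← hG m (fun b => u b * c b) hm, SimpleGraph.comap_comap]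
  congr 1
  funext w
  simp only [Function.comp_apply, blockAffine_blockAffine, mul_comm m u]
  simp

theorem BlockInvariant.adj_of_ne {K : Set B} {G : SimpleGraph (Σ b, F b)}
    (hG : BlockInvariant K G) {b b' : B} (hb : b ≠ b') {x x' : F b} {y y' : F b'}
    (h : G.Adj ⟨b, x⟩ ⟨b', y⟩) : G.Adj ⟨b, x'⟩ ⟨b', y'⟩ := by
  classical
  rw [← hG 1 (Function.update (Function.update 0 b (x - x')) b' (y - y')) fun _ _ => rfl]
  simpa [blockAffine_mk, hb] using h

theorem exists_natCast_eq_and [∀ b, Fintype (F b)] {K : Set B}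
    (hcast : ∀ b ∉ K, Function.Surjective (Nat.cast : ℕ → F b))
    (hcop : ∀ b ∉ K, ∀ b' ∉ K, b ≠ b' → (Fintype.card (F b)).Coprime (Fintype.card (F b')))
    {b b' : B} (hb : b ≠ b') (s : F b) (t : F b') :
    ∃ k : ℕ, (b ∉ K → (k : F b) = s) ∧ (b' ∉ K → (k : F b') = t) := by
  by_cases h : b ∈ K
  · by_cases h' : b' ∈ K
    · exact ⟨0, fun hn => absurd h hn, fun hn => absurd h' hn⟩
    · obtain ⟨k, hk⟩ := hcast b' h' t
      exact ⟨k, fun hn => absurd h hn, fun _ => hk⟩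
  · obtain ⟨k, rfl⟩ := hcast b h s
    by_cases h' : b' ∈ K
    · exact ⟨k, fun _ => rfl, fun hn => absurd h' hn⟩
    · obtain ⟨l, rfl⟩ := hcast b' h' t
      obtain ⟨r, hr, hr'⟩ := Nat.chineseRemainder (hcop b h b' h' hb) k l
      exact ⟨r, fun _ => natCast_eq_of_modEq_card hr, fun _ => natCast_eq_of_modEq_card hr'⟩

theorem blockInvariant_of_translations_of_comap_eq [∀ b, Fintype (F b)] {K : Set B}
    (hcast : ∀ b ∉ K, Function.Surjective (Nat.cast : ℕ → F b))
    (hcop : ∀ b ∉ K, ∀ b' ∉ K, b ≠ b' → (Fintype.card (F b)).Coprime (Fintype.card (F b')))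
    {ζ : ∀ b, (F b)ˣ} {c₀ : ∀ b, F b} (hζ : ∀ b ∈ K, ∀ m, ∃ k : ℕ, ζ b ^ k = m)
    (hζ' : ∀ b ∉ K, ζ b = 1) (hc : ∀ b ∈ K, c₀ b = 0) (hc' : ∀ b ∉ K, c₀ b = 1)
    {G : SimpleGraph (Σ b, F b)}
    (hS : ∀ v : ∀ b, F b, (∀ b ∉ K, v b = 0) → G.comap (blockAffine 1 v) = G)
    (hg : G.comap (blockAffine ζ c₀) = G) : BlockInvariant K G := by
  classical
  intro m c hm
  have hmul (b : B) : ζ b * c₀ b = c₀ b := by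
    by_cases hb : b ∈ K
    · simp [hc b hb]
    · simp [hζ' b hb]
  suffices key : ∀ w w' : Σ b, F b, ∃ (k : ℕ) (v : ∀ b, F b), (∀ b ∉ K, v b = 0) ∧
      blockAffine 1 v ((blockAffine ζ c₀ ^ k) w) = blockAffine m c w ∧
      blockAffine 1 v ((blockAffine ζ c₀ ^ k) w') = blockAffine m c w' by
    ext w w'
    obtain ⟨k, v, hv, h, h'⟩ := key w w'
    conv_rhs => rw [← comap_pow_eq hg k, ← hS v hv]
    simp only [SimpleGraph.comap_adj, h, h']
  rintro ⟨b, x⟩ ⟨b', y⟩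
  simp only [blockAffine_pow_apply hmul, blockAffine_blockAffine]
  simp only [blockAffine_mk, Sigma.mk.injEq, heq_eq_eq, true_and, one_mul, Pi.pow_apply,
    Pi.one_apply, Units.val_one, Units.val_pow_eq_pow_val]
  by_cases hb : b = b'
  · subst hb
    by_cases hK : b ∈ K
    · obtain ⟨k, hk⟩ := hζ b hK (m b)
      have hk' : (ζ b : F b) ^ k = m b := by rw [← hk, Units.val_pow_eq_pow_val]
      refine ⟨k, Function.update 0 b (c b), fun i hi => ?_, ?_, ?_⟩
      · rw [Function.update_of_ne (ne_of_mem_of_not_mem hK hi).symm, Pi.zero_apply]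
      · simp [hk', hc b hK]
      · simp [hk', hc b hK]
    · obtain ⟨k, hk⟩ := hcast b hK (c b)
      exact ⟨k, 0, fun _ _ => rfl, by simp [hζ' b hK, hm b hK, hc' b hK, hk],
        by simp [hζ' b hK, hm b hK, hc' b hK, hk]⟩
  · obtain ⟨k, hk, hk'⟩ := exists_natCast_eq_and hcast hcop hb (c b) (c b')
    obtain ⟨z, rfl, rfl⟩ : ∃ z : ∀ b, F b, z b = x ∧ z b' = y :=
      ⟨Function.update (Function.update 0 b x) b' y, by simp [hb], by simp⟩
    have (i : B) (hi : i ∉ K → (k : F i) = c i) :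
        (ζ i : F i) ^ k * z i + (k * c₀ i +
          if i ∈ K then m i * z i + c i - (ζ i : F i) ^ k * z i else 0) = m i * z i + c i := by
      by_cases hK : i ∈ K
      · simp [hK, hc i hK]
      · simp [hK, hc' i hK, hζ' i hK, hm i hK, hi hK]
    exact ⟨k, fun i => if i ∈ K then m i * z i + c i - (ζ i : F i) ^ k * z i else 0,
      fun i hi => if_neg hi, this b hk, this b' hk'⟩

theorem isPGroup_pi {ι : Type} [Fintype ι] {Γ : ι → Type} [∀ i, Group (Γ i)] {p : ℕ}
    (h : ∀ i, IsPGroup p (Γ i)) : IsPGroup p (∀ i, Γ i) := by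
  intro g
  choose k hk using fun i => h i (g i)
  refine ⟨∑ i, k i, funext fun i => ?_⟩
  exact orderOf_dvd_iff_pow_eq_one.1 ((orderOf_dvd_of_pow_eq_one (hk i)).trans
    (pow_dvd_pow p (Finset.single_le_sum (fun _ _ => Nat.zero_le _) (Finset.mem_univ i))))

/-- The action of blockwise multipliers on a disjoint union of fields. -/
def blockMul (U : ∀ b, Subgroup (F b)ˣ) : (∀ b, U b) →* Equiv.Perm (Σ b, F b) where
  toFun u := blockAffine (fun b => u b) 0
  map_one' := by
    ext1 ⟨b, x⟩
    simp [blockAffine_mk]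
  map_mul' u u' := by
    ext1 ⟨b, x⟩
    simp [blockAffine_mk, mul_assoc]

/-- An `H`-free graph invariant under blockwise affine maps has no edges inside the blocks. -/
theorem not_adj_of_invariant {V : Type} {H : SimpleGraph V} {K : Set B}
    {U : ∀ b, Subgroup (F b)ˣ} (hK : ∀ b ∈ K, ∃ x : V → F b, Function.Injective x)
    (hU : ∀ b ∉ K, ∃ x : V → F b, ∀ i j, i ≠ j →
      ∃ u ∈ U b, x i - x j = (u : F b) ∨ x j - x i = (u : F b))
    {G : SimpleGraph (Σ b, F b)} (hH : ¬ ContainsCopy H G) (hG : BlockInvariant K G)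
    (hGU : ∀ u, G.comap (blockMul U u) = G) (b : B) (x y : F b) : ¬ G.Adj ⟨b, x⟩ ⟨b, y⟩ := by
  classical
  intro hadj
  have hxy : x - y ≠ 0 := sub_ne_zero.2 fun h => hadj.ne (by rw [h])
  apply hH
  by_cases hb : b ∈ K
  · obtain ⟨z, hz⟩ := hK b hb
    refine ⟨fun i => ⟨b, z i⟩, fun i j hij => hz (by simpa using hij), fun i j hij => ?_⟩
    have hzij : z i - z j ≠ 0 := sub_ne_zero.2 (hz.ne hij.ne)
    have hd : (x - y) / (z i - z j) ≠ 0 := div_ne_zero hxy hzij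
    rw [← hG (Function.update 1 b (Units.mk0 _ hd))
      (Function.update 0 b (x - (x - y) / (z i - z j) * z i)) fun b' hb' => by
        rw [Function.update_of_ne (ne_of_mem_of_not_mem hb hb').symm, Pi.one_apply]]
    simp only [SimpleGraph.comap_adj, blockAffine_mk, Function.update_self, Units.val_mk0]
    convert hadj using 2
    · ring
    · field_simp
      ring
  · obtain ⟨z, hz⟩ := hU b hb
    have hne (i j : V) (hij : i ≠ j) : z i ≠ z j := fun h => by
      obtain ⟨u, _, h' | h'⟩ := hz i j hij <;> exact u.ne_zero (by rw [← h', h, sub_self])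
    refine ⟨fun i => ⟨b, (x - y) * z i⟩, fun i j hij => ?_, ?_⟩
    · by_contra hne'
      exact hne i j hne' (mul_left_cancel₀ hxy (by simpa using hij))
    · have main (i j : V) (u : (F b)ˣ) (hu : u ∈ U b) (h : z i - z j = (u : F b)) :
          G.Adj ⟨b, (x - y) * z i⟩ ⟨b, (x - y) * z j⟩ := by
        rw [← hGU (Function.update 1 b ⟨u, hu⟩)] at hadj
        rw [← hG 1 (Function.update 0 b (u * y - (x - y) * z j)) fun _ _ => rfl]
        simp only [SimpleGraph.comap_adj, blockMul, MonoidHom.coe_mk, OneHom.coe_mk,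
          blockAffine_mk, Function.update_self, Pi.zero_apply, add_zero] at hadj
        simp only [SimpleGraph.comap_adj, blockAffine_mk, Function.update_self, Pi.one_apply,
          Units.val_one, one_mul]
        convert hadj using 2
        · rw [← h]
          ring
        · ring
      intro i j hij
      obtain ⟨u, hu, h | h⟩ := hz i j hij.ne
      · exact main i j u hu h
      · exact (main j i u hu h).symm

/-- The invariant `H`-free graphs are the blow-ups of graphs without homomorphism from `H`. -/
theorem invariant_eq_image_comap_fst {V : Type} {H : SimpleGraph V} {K : Set B}
    {U : ∀ b, Subgroup (F b)ˣ} (hK : ∀ b ∈ K, ∃ x : V → F b, Function.Injective x)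
    (hU : ∀ b ∉ K, ∃ x : V → F b, ∀ i j, i ≠ j →
      ∃ u ∈ U b, x i - x j = (u : F b) ∨ x j - x i = (u : F b)) :
    {G : SimpleGraph (Σ b, F b) | (¬ ContainsCopy H G ∧ BlockInvariant K G) ∧
      ∀ u, G.comap (blockMul U u) = G} =
    SimpleGraph.comap Sigma.fst '' {G : SimpleGraph B | IsEmpty (H →g G)} := by
  have hinj (b : B) : ∃ x : V → F b, Function.Injective x := by
    by_cases hb : b ∈ K
    · exact hK b hb
    · obtain ⟨x, hx⟩ := hU b hb
      refine ⟨x, fun i j hij => by_contra fun hne => ?_⟩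
      obtain ⟨u, _, h | h⟩ := hx i j hne <;> exact u.ne_zero (by rw [← h, hij, sub_self])
  choose z hz using hinj
  ext G
  constructor
  · rintro ⟨⟨hH, hG⟩, hGU⟩
    have hfst : (G.comap fun b => (⟨b, 0⟩ : Σ b, F b)).comap Sigma.fst = G := by
      ext ⟨b, x⟩ ⟨b', y⟩
      by_cases hb : b = b'
      · subst hb
        exact iff_of_false (SimpleGraph.irrefl _)
          (not_adj_of_invariant hK hU hH hG hGU b x y)
      · exact ⟨hG.adj_of_ne hb, hG.adj_of_ne hb⟩
    refine ⟨_, ⟨fun f => hH ?_⟩, hfst⟩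
    refine ⟨fun v => ⟨f v, z (f v) v⟩, fun v w hvw => ?_, fun v w hvw => ?_⟩
    · have hfw : f v = f w := congrArg Sigma.fst hvw
      have hvw' : (⟨f v, z (f v) v⟩ : Σ b, F b) = ⟨f v, z (f v) w⟩ := hvw.trans (by rw [hfw])
      exact hz _ (by simpa using hvw')
    · have h : ((G.comap fun b => (⟨b, 0⟩ : Σ b, F b)).comap Sigma.fst).Adj
          ⟨f v, z (f v) v⟩ ⟨f w, z (f w) w⟩ := f.map_adj hvw
      rwa [hfst] at h
  · rintro ⟨G', hG', rfl⟩
    refine ⟨⟨fun ⟨f, _, hf⟩ => hG'.false ⟨fun v => (f v).1, fun {v w} hvw => hf v w hvw⟩,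
      fun m c _ => rfl⟩, fun u => rfl⟩

theorem comap_fst_injective :
    Function.Injective (SimpleGraph.comap (Sigma.fst : (Σ b, F b) → B)) := by
  intro G G' h
  have := congrArg (SimpleGraph.comap fun b => (⟨b, 0⟩ : Σ b, F b)) h
  rwa [SimpleGraph.comap_comap, SimpleGraph.comap_comap] at this

/-- A decision tree for `H`-freeness on a disjoint union of suitable blocks queries all edges. -/
theorem le_depth_of_blocks [Fintype B] [∀ b, Fintype (F b)] {V : Type} [Fintype V]
    {H : SimpleGraph V} (hH : H.edgeSet.Nonempty) {K : Set B} (htwo : ∀ b ∈ K, (2 : F b) = 0)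
    (hcard : ∀ b ∈ K, Fintype.card V ≤ Fintype.card (F b))
    (hcast : ∀ b ∉ K, Function.Surjective (Nat.cast : ℕ → F b))
    (hcop : ∀ b ∉ K, ∀ b' ∉ K, b ≠ b' → (Fintype.card (F b)).Coprime (Fintype.card (F b')))
    {U : ∀ b, Subgroup (F b)ˣ} (hUp : ∀ b, IsPGroup 2 (U b))
    (hU : ∀ b ∉ K, ∃ x : V → F b, ∀ i j, i ≠ j →
      ∃ u ∈ U b, x i - x j = (u : F b) ∨ x j - x i = (u : F b))
    {t : ℕ} (ht : Fintype.card V ≤ 2 ^ 2 ^ t) {q : ℕ}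
    (hB : Fintype.card B = (2 ^ 2 ^ t - 1) * q + 1)
    {n : ℕ} (hn : Fintype.card (Σ b, F b) = n) (T : DecisionTree (EdgeVar n))
    (hT : ∀ x, T.eval x = true ↔ graphOfInput x ∈ ForbiddenSubgraphProperty H n) :
    n * (n - 1) / 2 ≤ T.depth := by
  classical
  by_contra! hd
  have hgen (b : B) : ∃ ζ : (F b)ˣ, (b ∈ K → ∀ m, ∃ k : ℕ, ζ ^ k = m) ∧ (b ∉ K → ζ = 1) := by
    by_cases hb : b ∈ K
    · obtain ⟨ζ, hζ⟩ := IsCyclic.exists_monoid_generator (α := (F b)ˣ)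
      exact ⟨ζ, fun _ m => hζ m, fun h => absurd hb h⟩
    · exact ⟨1, fun h => absurd h hb, fun _ => rfl⟩
  choose ζ hζ hζ' using hgen
  let c₀ (b : B) : F b := if b ∈ K then 0 else 1
  let S : Finset (Equiv.Perm (Σ b, F b)) :=
    (Finset.univ.filter fun v : ∀ b, F b => ∀ b ∉ K, v b = 0).image (blockAffine 1)
  have hmem {σ : Equiv.Perm (Σ b, F b)} :
      σ ∈ S ↔ ∃ v : ∀ b, F b, (∀ b ∉ K, v b = 0) ∧ blockAffine 1 v = σ := by
    simp [S]
  have key := even_ncard_invariant_graphs H hn T hT hd S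
    (by
      intro σ hσ w
      obtain ⟨v, hv, rfl⟩ := hmem.1 hσ
      obtain ⟨b, x⟩ := w
      have : v b + v b = 0 := by
        by_cases hb : b ∈ K
        · rw [← two_mul, htwo b hb, zero_mul]
        · rw [hv b hb, add_zero]
      simp [blockAffine_mk, add_assoc, this])
    (by
      intro σ hσ τ hτ w
      obtain ⟨v, hv, rfl⟩ := hmem.1 hσ
      obtain ⟨v', hv', rfl⟩ := hmem.1 hτ
      obtain ⟨b, x⟩ := w
      simp [blockAffine_mk, add_right_comm])
    (blockAffine ζ c₀)
    (by
      intro σ hσ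
      obtain ⟨v, hv, rfl⟩ := hmem.1 hσ
      refine ⟨_, hmem.2 ⟨fun b => ζ b * v b, fun b hb => by simp [hv b hb], rfl⟩, ?_⟩
      rintro ⟨b, x⟩
      simp [blockAffine_mk, mul_add, add_right_comm])
    (by
      intro σ hσ
      obtain ⟨v, hv, rfl⟩ := hmem.1 hσ
      refine ⟨_, hmem.2 ⟨fun b => (ζ b)⁻¹ * v b, fun b hb => by simp [hv b hb], rfl⟩, ?_⟩
      rintro ⟨b, x⟩
      simp [blockAffine_mk, mul_add, add_right_comm])
  have hset : {G : SimpleGraph (Σ b, F b) | ¬ ContainsCopy H G ∧ (∀ σ ∈ S, G.comap σ = G) ∧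
      G.comap (blockAffine ζ c₀) = G} = {G | ¬ ContainsCopy H G ∧ BlockInvariant K G} := by
    ext G
    refine and_congr_right fun _ => ⟨fun ⟨h, h'⟩ => ?_, fun h => ⟨fun σ hσ => ?_, ?_⟩⟩
    · exact blockInvariant_of_translations_of_comap_eq hcast hcop hζ hζ'
        (fun b hb => if_pos hb) (fun b hb => if_neg hb)
        (fun v hv => h _ (hmem.2 ⟨v, hv, rfl⟩)) h'
    · obtain ⟨v, _, rfl⟩ := hmem.1 hσ
      exact h _ _ fun _ _ => rfl
    · exact h _ _ hζ'
  have hmod := ncard_modEq_ncard_invariant (isPGroup_pi hUp) (blockMul U)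
    {G : SimpleGraph (Σ b, F b) | ¬ ContainsCopy H G ∧ BlockInvariant K G}
    (fun u G hG => ⟨fun h => hG.1 ((containsCopy_comap_iff H G _).1 h), hG.2.comap _⟩)
  have hodd := odd_ncard_isEmpty_hom H hH ht q B hB
  simp only [Set.mem_ofPred_eq] at hmod
  rw [hset] at key
  rw [invariant_eq_image_comap_fst
      (fun b hb => (Function.Embedding.nonempty_of_card_le (hcard b hb)).elim
        fun e => ⟨e, e.injective⟩) hU,
    Set.ncard_image_of_injective _ comap_fst_injective] at hmod
  rw [Nat.even_iff] at key
  rw [Nat.odd_iff] at hodd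
  rw [Nat.ModEq, key, hodd] at hmod
  exact absurd hmod (by decide)

end Blocks

theorem exists_decisionTree_depth_le {n : ℕ} (P : Set (SimpleGraph (Fin n))) :
    ∃ T : DecisionTree (EdgeVar n), (∀ x, T.eval x = true ↔ graphOfInput x ∈ P) ∧
      T.depth ≤ n * (n - 1) / 2 := by
  classical
  let φ (p : EdgeVar n) : {e : Sym2 (Fin n) // ¬ e.IsDiag} := ⟨s(p.1.1, p.1.2), by
    simpa using p.2.ne⟩
  have hφ : Function.Injective φ := by
    rintro ⟨⟨i, j⟩, hij⟩ ⟨⟨k, l⟩, hkl⟩ h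
    have h' : s(i, j) = s(k, l) := congrArg Subtype.val h
    rcases Sym2.eq_iff.1 h' with ⟨rfl, rfl⟩ | ⟨rfl, rfl⟩
    · rfl
    · exact absurd hij (lt_asymm hkl)
  have := Fintype.ofInjective φ hφ
  obtain ⟨T, hT, hd⟩ := DecisionTree.exists_depth_le fun x : EdgeVar n → Bool => graphOfInput x ∈ P
  have hcard := Fintype.card_le_of_injective φ hφ
  rw [Sym2.card_subtype_not_diag, Fintype.card_fin, Nat.choose_two_right] at hcard
  exact ⟨T, hT, hd.trans hcard⟩

theorem le_depth_of_sum_eq {V : Type} [Fintype V] {H : SimpleGraph V}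
    (hH : H.edgeSet.Nonempty) {B : Type} [Fintype B] {K : Set B} {s : B → ℕ} {a : ℕ}
    (hK : ∀ b ∈ K, ∃ e ≠ 0, s b = 2 ^ e ∧ Fintype.card V ≤ s b)
    (hP : ∀ b ∉ K, IsBlockPrime (Fintype.card V) a (s b))
    (hinj : ∀ b ∉ K, ∀ b' ∉ K, b ≠ b' → s b ≠ s b')
    {t : ℕ} (ht : Fintype.card V ≤ 2 ^ 2 ^ t) {q : ℕ}
    (hB : Fintype.card B = (2 ^ 2 ^ t - 1) * q + 1)
    {n : ℕ} (hn : ∑ b, s b = n) (T : DecisionTree (EdgeVar n))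
    (hT : ∀ x, T.eval x = true ↔ graphOfInput x ∈ ForbiddenSubgraphProperty H n) :
    n * (n - 1) / 2 ≤ T.depth := by
  have hF (b : B) : ∃ (F : Type) (_ : Field F) (_ : Fintype F) (U : Subgroup Fˣ),
      Fintype.card F = s b ∧ IsPGroup 2 U ∧ (b ∈ K → (2 : F) = 0) ∧
      (b ∉ K → Function.Surjective (Nat.cast : ℕ → F)) ∧
      (b ∉ K → ∃ x : V → F, ∀ i j, i ≠ j →
        ∃ u ∈ U, x i - x j = (u : F) ∨ x j - x i = (u : F)) := by
    by_cases hb : b ∈ K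
    · obtain ⟨e, he, hs, -⟩ := hK b hb
      refine ⟨GaloisField 2 e, inferInstance, Fintype.ofFinite _, ⊥, ?_, IsPGroup.of_bot,
        fun _ => CharTwo.two_eq_zero, fun h => absurd hb h, fun h => absurd hb h⟩
      rw [Fintype.card_eq_nat_card, GaloisField.card 2 e he, hs]
    · obtain ⟨hp, -, -, U, hU, x, hx⟩ := hP b hb
      have := Fact.mk hp
      refine ⟨ZMod (s b), inferInstance, inferInstance, U, ZMod.card _, hU,
        fun h => absurd h hb, fun _ => ZMod.natCast_zmod_surjective,
        fun _ => ⟨fun i => x (Fintype.equivFin V i), fun i j hij => ?_⟩⟩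
      rcases lt_or_gt_of_ne ((Fintype.equivFin V).injective.ne hij) with h | h
      · obtain ⟨u, hu, hux⟩ := hx _ _ h
        exact ⟨u, hu, Or.inr hux⟩
      · obtain ⟨u, hu, hux⟩ := hx _ _ h
        exact ⟨u, hu, Or.inl hux⟩
  choose F _ _ U hcard hU htwo hcast hx using hF
  refine le_depth_of_blocks (F := F) hH htwo (fun b hb => ?_) hcast (fun b hb b' hb' hne => ?_)
    hU hx ht hB ?_ T hT
  · obtain ⟨_, _, _, h⟩ := hK b hb
    rwa [hcard]
  · rw [hcard, hcard]
    exact (Nat.coprime_primes (hP b hb).1 (hP b' hb').1).2 (hinj b hb b' hb' hne)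
  · rw [Fintype.card_sigma, ← hn]
    exact Finset.sum_congr rfl fun b _ => hcard b

theorem infinite_isBlockPrime
    (weakChowla : ∀ ε : ℝ, 0 < ε → {p : ℕ | NearFermatPrime ε p}.Infinite)
    {h : ℕ} (hh : 0 < h) (a : ℕ) : {p | IsBlockPrime h a p}.Infinite := by
  have hε : (0 : ℝ) < 1 / (4 * h) := by positivity
  refine ((weakChowla _ hε).sdiff (Set.finite_lt_nat (4 ^ (4 * h) + 4 ^ (a + 1)))).mono ?_
  rintro p ⟨hp, hlt⟩
  have hle : 4 ^ (4 * h) + 4 ^ (a + 1) ≤ p := not_lt.1 hlt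
  exact hp.isBlockPrime hh (le_of_add_le_left hle) (le_of_add_le_right hle)

/-- Every large `n` is a sum of `u` copies of `P`, `v` copies of `2 * P` and the first `j` of
the given integers congruent to `1` modulo `P`, with `u + v + j` congruent to `1` modulo `T`. -/
theorem exists_block_decomposition {P T : ℕ} (hP : 0 < P) (hT : 0 < T) {r : ℕ → ℕ}
    (hr : ∀ i, r i ≡ 1 [MOD P]) {n : ℕ}
    (hn : ∑ i ∈ Finset.range P, r i + P * (2 * T) ≤ n) :
    ∃ u v j q : ℕ, u * P + (v * (2 * P) + ∑ i ∈ Finset.range j, r i) = n ∧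
      u + (v + j) = T * q + 1 := by
  have hmod (j : ℕ) : ∑ i ∈ Finset.range j, r i ≡ j [MOD P] := by
    induction j with
    | zero => rfl
    | succ j ih =>
      rw [Finset.sum_range_succ]
      exact ih.add (hr j)
  have hj : n % P < P := Nat.mod_lt _ hP
  have hle : ∑ i ∈ Finset.range (n % P), r i ≤ ∑ i ∈ Finset.range P, r i :=
    Finset.sum_le_sum_of_subset (Finset.range_mono hj.le)
  obtain ⟨m, hm⟩ := (Nat.modEq_iff_dvd' (by omega)).1 ((hmod (n % P)).trans (Nat.mod_modEq n P))
  have hm2 : 2 * T ≤ m := by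
    refine Nat.le_of_mul_le_mul_left (c := P) ?_ hP
    omega
  set j := n % P
  have hv : (m + j + T - 1) % T < T := Nat.mod_lt _ hT
  have hdiv := Nat.div_add_mod (m + j + T - 1) T
  set v := (m + j + T - 1) % T
  obtain ⟨q, hq⟩ : ∃ q, (m + j + T - 1) / T = q + 1 :=
    Nat.exists_eq_add_of_le' (Nat.div_pos (by omega) hT)
  rw [hq, mul_add, mul_one] at hdiv
  obtain ⟨u, hu⟩ : ∃ u, m = u + 2 * v := Nat.exists_eq_add_of_le' (by omega)
  refine ⟨u, v, j, q, ?_, by omega⟩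
  have : P * m = u * P + v * (2 * P) := by
    rw [hu]
    ring
  omega

/-- Assuming the Weak Chowla Conjecture, for every finite graph `H` with at least one
edge, the forbidden-subgraph property `Q_n^H` is eventually evasive. -/
theorem forbidden_subgraph_eventually_evasive_of_weakChowla
    (weakChowla : ∀ ε : ℝ, 0 < ε → {p : ℕ | NearFermatPrime ε p}.Infinite)
    {V : Type} [Fintype V] (H : SimpleGraph V) (hH : H.edgeSet.Nonempty) :
    ∃ N : ℕ, ∀ n : ℕ, N ≤ n → Evasive (ForbiddenSubgraphProperty H n) := by
  have hh : 0 < Fintype.card V := by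
    obtain ⟨e, -⟩ := hH
    induction e with
    | h u v => exact Fintype.card_pos_iff.2 ⟨u⟩
  set h := Fintype.card V with hV
  have hh2 : h ≤ 2 ^ h := Nat.lt_two_pow_self.le
  let r := (infinite_isBlockPrime weakChowla hh h).natEmbedding
  have hr (i : ℕ) : IsBlockPrime h h (r i) := (r i).2
  have hT : 0 < 2 ^ 2 ^ h - 1 := Nat.sub_pos_of_lt (Nat.one_lt_two_pow (by positivity))
  refine ⟨∑ i ∈ Finset.range (2 ^ h), (r i : ℕ) + 2 ^ h * (2 * (2 ^ 2 ^ h - 1)), fun n hn => ?_⟩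
  obtain ⟨u, v, j, q, hsum, hcard⟩ :=
    exists_block_decomposition (P := 2 ^ h) (by positivity) hT (fun i => (hr i).2.1) hn
  have htree := exists_decisionTree_depth_le (ForbiddenSubgraphProperty H n)
  refine le_antisymm (Nat.sInf_le htree) (le_csInf ⟨_, htree⟩ ?_)
  rintro d ⟨T, hTeval, hTd⟩
  refine le_trans ?_ hTd
  refine le_depth_of_sum_eq (B := Fin u ⊕ Fin v ⊕ Fin j) (a := h) (t := h) (q := q) hH
    (K := {b | ∀ i, b ≠ .inr (.inr i)})
    (s := Sum.elim (fun _ => 2 ^ h) (Sum.elim (fun _ => 2 ^ (h + 1)) fun i => r i)) ?_ ?_ ?_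
    ?_ ?_ ?_ T hTeval
  · rintro (i | i | i) hi
    · exact ⟨h, hh.ne', rfl, hh2⟩
    · exact ⟨h + 1, h.succ_ne_zero, rfl, hh2.trans (Nat.pow_le_pow_right two_pos h.le_succ)⟩
    · exact absurd rfl (hi i)
  · intro b hb
    obtain ⟨i, rfl⟩ : ∃ i, b = .inr (.inr i) := by simpa using hb
    exact hr i
  · intro b hb b' hb' hne
    obtain ⟨i, rfl⟩ : ∃ i, b = .inr (.inr i) := by simpa using hb
    obtain ⟨i', rfl⟩ : ∃ i, b' = .inr (.inr i) := by simpa using hb'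
    intro heq
    have hii : (i : ℕ) = i' := r.injective (Subtype.ext heq)
    exact hne (by rw [Fin.ext hii])
  · exact hh2.trans (Nat.pow_le_pow_right two_pos hh2)
  · simpa using hcard
  · simpa [Finset.sum_range, pow_succ'] using hsum
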